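/- arXiv:2404.12350 — 13 statements merged into one kernel-verified Lean document; each statement's English description precedes it below -/
import Mathlib

section
/- Assume f satisfies the ellipticity condition (f_i(λ) > 0 on Γ for all i) and the concavity condition. Let σ ∈ ℝ satisfy sup_{∂Γ} f < σ < sup_Γ f, where sup_{∂Γ} f = sup_{λ₀∈∂Γ} limsup_{λ→λ₀} f(λ), and set ∂Γ^σ = {λ ∈ Γ : f(λ) = σ}. Suppose μ ∈ ℝⁿ and δ, R > 0 are such that (μ − 2δ·(1,…,1) + Γₙ) ∩ ∂Γ^σ ⊆ B_R(0), the open Euclidean ball of radius R about the origin. Then there exists a constant ε > 0, depending only on σ, μ, δ, R and f, such that for every λ ∈ ∂Γ^σ, either Σ_{i=1}^n f_i(λ)(μ_i − λ_i) ≥ ε(1 + Σ_{i=1}^n f_i(λ) + |Σ_{i=1}^n f_i(λ)λ_i|), or f_i(λ) ≥ ε(1 + Σ_{j=1}^n f_j(λ) + |Σ_{j=1}^n f_j(λ)λ_j|) for every index 1 ≤ i ≤ n. -/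
open Filter Topology

/-- The `i`-th partial derivative `f_i(x) = ∂f/∂λ_i (x)`. -/
noncomputable def fpartial {n : ℕ} (f : EuclideanSpace ℝ (Fin n) → ℝ) (i : Fin n)
    (x : EuclideanSpace ℝ (Fin n)) : ℝ :=
  fderiv ℝ f x (EuclideanSpace.single i 1)

theorem fderiv_eq_sum_aux {n : ℕ} (f : EuclideanSpace ℝ (Fin n) → ℝ)
    (x w : EuclideanSpace ℝ (Fin n)) :
    fderiv ℝ f x w = ∑ i, fpartial f i x * w i := by
  have hw : w = ∑ i, w i • EuclideanSpace.single i (1 : ℝ) := by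
    ext j
    simp [Finset.sum_apply, Pi.single_apply]
  conv_lhs => rw [hw]
  simp [map_sum, fpartial, mul_comm]

theorem tangent_aux {n : ℕ} {Γ : Set (EuclideanSpace ℝ (Fin n))}
    {f : EuclideanSpace ℝ (Fin n) → ℝ} (hconc : ConcaveOn ℝ Γ f)
    {x y : EuclideanSpace ℝ (Fin n)} (hx : x ∈ Γ) (hy : y ∈ Γ)
    (hd : DifferentiableAt ℝ f x) :
    f y ≤ f x + ∑ i, fpartial f i x * (y i - x i) := by
  have h1 : HasDerivAt (fun t : ℝ => f (x + t • (y - x))) (fderiv ℝ f x (y - x)) 0 := by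
    have hl : HasDerivAt (fun t : ℝ => x + t • (y - x)) (y - x) 0 := by
      simpa using ((hasDerivAt_id (0 : ℝ)).smul_const (y - x)).const_add x
    have hf : HasFDerivAt f (fderiv ℝ f x) (x + (0 : ℝ) • (y - x)) := by
      simpa using hd.hasFDerivAt
    exact hf.comp_hasDerivAt (0 : ℝ) hl
  have h2 := (hasDerivAt_iff_tendsto_slope.1 h1).mono_left
    (nhdsWithin_mono (0 : ℝ) (fun t (ht : t ∈ Set.Ioi (0 : ℝ)) => (ne_of_gt ht : t ≠ 0)))
  have h3 : f y - f x ≤ fderiv ℝ f x (y - x) := by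
    refine ge_of_tendsto h2 ?_
    filter_upwards [Ioo_mem_nhdsGT (zero_lt_one' ℝ)] with t ht
    have h4 := hconc.2 hx hy (by linarith [ht.2] : (0 : ℝ) ≤ 1 - t) ht.1.le (by ring)
    have h5 : (1 - t) • x + t • y = x + t • (y - x) := by module
    rw [h5] at h4
    simp only [slope_def_field, zero_smul, add_zero, sub_zero]
    rw [le_div_iff₀ ht.1]
    simp only [smul_eq_mul] at h4
    linarith
  rw [fderiv_eq_sum_aux] at h3
  simp only [PiLp.sub_apply] at h3
  linarith

theorem closed_aux {n : ℕ} {Γ : Set (EuclideanSpace ℝ (Fin n))}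
    {f : EuclideanSpace ℝ (Fin n) → ℝ} (hΓopen : IsOpen Γ) (hcont : ContinuousOn f Γ) {σ : ℝ}
    (hσlow : (⨆ x ∈ frontier Γ,
        Filter.limsup (fun y => ((f y : ℝ) : EReal)) (nhdsWithin x Γ)) < (σ : EReal)) :
    IsClosed {x | x ∈ Γ ∧ σ ≤ f x} := by
  rw [isClosed_iff_frequently]
  intro x hx
  have hxc : x ∈ closure Γ := mem_closure_iff_frequently.2 (hx.mono fun y hy => hy.1)
  by_cases hxΓ : x ∈ Γ
  · refine ⟨hxΓ, ?_⟩
    by_contra hlt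
    push Not at hlt
    have h := (hcont.continuousAt (hΓopen.mem_nhds hxΓ)).eventually_lt continuousAt_const hlt
    exact hx (h.mono fun y hy h2 => absurd h2.2 (not_le.2 hy))
  · exfalso
    have hxf : x ∈ frontier Γ := by
      rw [hΓopen.frontier_eq]; exact ⟨hxc, hxΓ⟩
    have hl : Filter.limsup (fun y => ((f y : ℝ) : EReal)) (nhdsWithin x Γ) < (σ : EReal) :=
      lt_of_le_of_lt (le_iSup₂ (f := fun x (_ : x ∈ frontier Γ) =>
        Filter.limsup (fun y => ((f y : ℝ) : EReal)) (nhdsWithin x Γ)) x hxf) hσlow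
    have h := Filter.eventually_lt_of_limsup_lt hl
    rw [eventually_nhdsWithin_iff] at h
    refine hx (h.mono fun y hy h2 => ?_)
    have := hy h2.1
    rw [EReal.coe_lt_coe_iff] at this
    exact absurd h2.2 (not_le.2 this)

theorem point_aux {n : ℕ} {Γ : Set (EuclideanSpace ℝ (Fin n))}
    {f : EuclideanSpace ℝ (Fin n) → ℝ}
    (hΓopen : IsOpen Γ) (hΓconv : Convex ℝ Γ)
    (hΓcone : ∀ x ∈ Γ, ∀ t : ℝ, 0 < t → t • x ∈ Γ)
    (hΓpos : {x : EuclideanSpace ℝ (Fin n) | ∀ i, 0 < x i} ⊆ Γ)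
    (hdiff : ∀ x ∈ Γ, DifferentiableAt ℝ f x)
    (hellip : ∀ x ∈ Γ, ∀ i, 0 < fpartial f i x)
    (hconc : ConcaveOn ℝ Γ f) {σ : ℝ}
    (hclosed : IsClosed {x | x ∈ Γ ∧ σ ≤ f x})
    {y : EuclideanSpace ℝ (Fin n)} (hy : y ∈ Γ) (hfy : σ < f y)
    (x : EuclideanSpace ℝ (Fin n))
    (hno : ∀ s : ℝ, 0 ≤ s → x + s • WithLp.toLp 2 (fun _ : Fin n => (1 : ℝ)) ∈ Γ →
      f (x + s • WithLp.toLp 2 (fun _ : Fin n => (1 : ℝ))) ≠ σ) :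
    x ∈ Γ ∧ σ < f x := by
  set e : EuclideanSpace ℝ (Fin n) := WithLp.toLp 2 (fun _ : Fin n => (1 : ℝ)) with he
  have hei : ∀ i, e i = 1 := fun i => rfl
  have hgc : Continuous (fun s : ℝ => x + s • e) := by fun_prop
  obtain ⟨N, hN0, hN⟩ : ∃ N : ℝ, 0 ≤ N ∧ ∀ i, y i - x i < N := by
    have : ∀ᶠ N : ℝ in atTop, 0 ≤ N ∧ ∀ i, y i - x i < N :=
      (eventually_ge_atTop 0).and (eventually_all.2 fun i => eventually_gt_atTop _)
    exact this.exists
  have hbΓ : x + N • e ∈ Γ := by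
    have hp : x + N • e - y ∈ Γ := hΓpos (fun i => by
      have := hN i
      simp only [PiLp.sub_apply, PiLp.add_apply, PiLp.smul_apply, hei, smul_eq_mul]
      linarith)
    have h2 := hΓcone _ (hΓconv hy hp (by norm_num : (0 : ℝ) ≤ 1/2)
      (by norm_num : (0 : ℝ) ≤ 1/2) (by norm_num)) 2 (by norm_num)
    convert h2 using 1
    module
  have hfb : f y ≤ f (x + N • e) := by
    have h := tangent_aux hconc hbΓ hy (hdiff _ hbΓ)
    have h' : ∑ i, fpartial f i (x + N • e) * (y i - (x + N • e) i) ≤ 0 :=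
      Finset.sum_nonpos fun i _ => by
        have := hN i
        refine mul_nonpos_of_nonneg_of_nonpos (hellip _ hbΓ i).le ?_
        simp only [PiLp.add_apply, PiLp.smul_apply, hei, smul_eq_mul]
        linarith
    linarith
  have hA : IsCompact (Set.Icc 0 N ∩ (fun s : ℝ => x + s • e) ⁻¹' {x | x ∈ Γ ∧ σ ≤ f x}) :=
    isCompact_Icc.inter_right (hclosed.preimage hgc)
  obtain ⟨s, ⟨⟨hs0, hsN⟩, hsΓ, hsf⟩, hmin⟩ := hA.exists_isLeast
    ⟨N, ⟨hN0, le_rfl⟩, hbΓ, hfy.le.trans hfb⟩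
  have hsf' : σ < f (x + s • e) := lt_of_le_of_ne hsf (hno s hs0 hsΓ).symm
  rcases hs0.eq_or_lt with h0 | hpos
  · subst h0
    simpa using And.intro hsΓ hsf'
  · exfalso
    have h1 : ∀ᶠ t in 𝓝 s, x + t • e ∈ Γ := hgc.continuousAt.eventually (hΓopen.mem_nhds hsΓ)
    have h2 : ∀ᶠ t in 𝓝 s, σ < f (x + t • e) := by
      have hc : ContinuousAt (fun t : ℝ => f (x + t • e)) s :=
        ContinuousAt.comp (g := f) (hdiff _ hsΓ).continuousAt hgc.continuousAt
      exact continuousAt_const.eventually_lt hc hsf'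
    have h3 : ∀ᶠ t in 𝓝[<] s, t < s := eventually_mem_nhdsWithin
    have h4 : ∀ᶠ t in 𝓝 s, 0 < t := lt_mem_nhds hpos
    obtain ⟨t, ⟨⟨ht1, ht2⟩, ht3⟩, ht4⟩ :=
      ((((h1.and h2).and h4).filter_mono nhdsWithin_le_nhds).and h3).exists
    have := hmin ⟨⟨ht3.le, ht4.le.trans hsN⟩, ht1, ht2.le⟩
    linarith

/-- Lemma 3.1 (key lemma for subsolutions): under ellipticity and concavity, for
`sup_{∂Γ} f < σ < sup_Γ f` and `μ` such that `(μ - 2δ·𝟙 + Γₙ) ∩ ∂Γ^σ ⊆ B_R(0)`, there is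
`ε > 0` such that every `λ ∈ ∂Γ^σ` satisfies one of the two stated inequalities. -/
theorem stmt0 {n : ℕ} (Γ : Set (EuclideanSpace ℝ (Fin n)))
    (f : EuclideanSpace ℝ (Fin n) → ℝ)
    (hΓopen : IsOpen Γ) (hΓconv : Convex ℝ Γ)
    (hΓcone : ∀ x ∈ Γ, ∀ t : ℝ, 0 < t → t • x ∈ Γ)
    (hΓsymm : ∀ e : Equiv.Perm (Fin n), ∀ x ∈ Γ, WithLp.toLp 2 (fun i => x (e i)) ∈ Γ)
    (hΓbdry : (frontier Γ).Nonempty)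
    (hΓpos : {x : EuclideanSpace ℝ (Fin n) | ∀ i, 0 < x i} ⊆ Γ)
    (hfsmooth : ContDiffOn ℝ (⊤ : ℕ∞) f Γ)
    (hfsymm : ∀ e : Equiv.Perm (Fin n), ∀ x ∈ Γ, f (WithLp.toLp 2 (fun i => x (e i))) = f x)
    (hellip : ∀ x ∈ Γ, ∀ i, 0 < fpartial f i x)
    (hconc : ConcaveOn ℝ Γ f)
    (σ : ℝ)
    (hσlow : (⨆ x ∈ frontier Γ,
        Filter.limsup (fun y => ((f y : ℝ) : EReal)) (nhdsWithin x Γ)) < (σ : EReal))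
    (hσhigh : (σ : EReal) < ⨆ x ∈ Γ, ((f x : ℝ) : EReal))
    (μ : EuclideanSpace ℝ (Fin n)) (δ R : ℝ) (hδ : 0 < δ) (hR : 0 < R)
    (hbound : ∀ x : EuclideanSpace ℝ (Fin n), x ∈ Γ → f x = σ →
      (∀ i, μ i - 2 * δ < x i) → x ∈ Metric.ball (0 : EuclideanSpace ℝ (Fin n)) R) :
    ∃ ε > (0 : ℝ), ∀ lam ∈ Γ, f lam = σ →
      (∑ i, fpartial f i lam * (μ i - lam i) ≥
        ε * (1 + ∑ i, fpartial f i lam + |∑ i, fpartial f i lam * lam i|)) ∨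
      (∀ i, fpartial f i lam ≥
        ε * (1 + ∑ j, fpartial f j lam + |∑ j, fpartial f j lam * lam j|)) := by
  have hdiff : ∀ x ∈ Γ, DifferentiableAt ℝ f x := fun x hx =>
    (hfsmooth.differentiableOn (by simp)).differentiableAt (hΓopen.mem_nhds hx)
  have hclosed := closed_aux hΓopen hfsmooth.continuousOn hσlow
  obtain ⟨y, hy, hfy⟩ : ∃ y ∈ Γ, σ < f y := by
    rw [lt_iSup_iff] at hσhigh
    obtain ⟨y, hy⟩ := hσhigh
    rw [lt_iSup_iff] at hy
    obtain ⟨hyΓ, h⟩ := hy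
    exact ⟨y, hyΓ, EReal.coe_lt_coe_iff.1 h⟩
  have hM : ∀ i, |μ i| ≤ ‖μ‖ := fun i => by
    simpa using PiLp.norm_apply_le μ i
  set M := ‖μ‖ with hMdef
  have hM0 : 0 ≤ M := norm_nonneg μ
  set T : ℝ := R + M + δ + 1 with hT
  have hT1 : 1 ≤ T := by linarith
  set X : Fin n → EuclideanSpace ℝ (Fin n) := fun j =>
    WithLp.toLp 2 (fun i => μ i - δ + if i = j then T else 0) with hX
  have hXi : ∀ j i, X j i = μ i - δ + if i = j then T else 0 := fun j i => rfl
  have hXΓ : ∀ j, X j ∈ Γ ∧ σ < f (X j) := by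
    intro j
    refine point_aux hΓopen hΓconv hΓcone hΓpos hdiff hellip hconc hclosed hy hfy _ ?_
    intro s hs hΓs hfs
    have hb := hbound _ hΓs hfs (fun i => by
      simp only [PiLp.add_apply, PiLp.smul_apply, hXi, smul_eq_mul]
      split_ifs <;> linarith)
    rw [mem_ball_zero_iff] at hb
    have h1 := (PiLp.norm_apply_le (X j + s • WithLp.toLp 2 (fun _ : Fin n => (1 : ℝ))) j)
    simp only [PiLp.add_apply, PiLp.smul_apply, hXi, smul_eq_mul, if_true, Real.norm_eq_abs] at h1
    have h2 := (le_abs_self _).trans h1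
    have h3 := (abs_le.1 (hM j)).1
    linarith
  obtain ⟨c, hc, hc0⟩ : ∃ c : ℝ, (∀ j, c < f (X j) - σ) ∧ 0 < c := by
    have : ∀ᶠ c : ℝ in 𝓝[>] 0, (∀ j, c < f (X j) - σ) ∧ 0 < c :=
      (eventually_all.2 fun j => (gt_mem_nhds (by linarith [(hXΓ j).2] :
        (0 : ℝ) < f (X j) - σ)).filter_mono nhdsWithin_le_nhds).and eventually_mem_nhdsWithin
    exact this.exists
  set C : ℝ := 1 + (M + T + 1) / δ + 1 / c with hC
  have hC1 : 1 ≤ C := by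
    have : 0 ≤ (M + T + 1) / δ := by positivity
    have : 0 ≤ 1 / c := by positivity
    linarith
  refine ⟨1 / (2 * C * T), by positivity, ?_⟩
  intro lam hlam hflam
  rw [or_iff_not_imp_left]
  intro hfail j
  have hv := hellip lam hlam
  set v : Fin n → ℝ := fun i => fpartial f i lam with hvdef
  change ¬ (∑ i, v i * (μ i - lam i) ≥ 1 / (2 * C * T) * (1 + ∑ i, v i + |∑ i, v i * lam i|))
    at hfail
  change v j ≥ 1 / (2 * C * T) * (1 + ∑ i, v i + |∑ i, v i * lam i|)
  have hvp : ∀ i, 0 < v i := hv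
  have htan : f (X j) ≤ f lam + ∑ i, v i * (X j i - lam i) :=
    tangent_aux hconc hlam (hXΓ j).1 (hdiff _ hlam)
  have hsplit : ∑ i, v i * (X j i - lam i)
      = ∑ i, v i * (μ i - lam i) - δ * ∑ i, v i + T * v j := by
    rw [Finset.mul_sum, ← Finset.sum_sub_distrib]
    have : T * v j = ∑ i, if i = j then T * v i else 0 := by simp
    rw [this, ← Finset.sum_add_distrib]
    refine Finset.sum_congr rfl fun i _ => ?_
    rw [hXi]
    split_ifs <;> ring
  have hPsplit : ∑ i, v i * (μ i - lam i) = ∑ i, v i * μ i - ∑ i, v i * lam i := by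
    rw [← Finset.sum_sub_distrib]
    exact Finset.sum_congr rfl fun i _ => by ring
  have hmu : |∑ i, v i * μ i| ≤ M * ∑ i, v i := by
    refine (Finset.abs_sum_le_sum_abs _ _).trans ?_
    rw [Finset.mul_sum]
    refine Finset.sum_le_sum fun i _ => ?_
    rw [abs_mul, abs_of_pos (hvp i), mul_comm]
    exact mul_le_mul_of_nonneg_right (hM i) (hvp i).le
  have hvjS : v j ≤ ∑ i, v i :=
    Finset.single_le_sum (f := v) (fun i _ => (hvp i).le) (Finset.mem_univ j)
  have hvj := hvp j
  have hcj := hc j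
  generalize (∑ i, v i) = S at *
  generalize (∑ i, v i * lam i) = P at *
  generalize (∑ i, v i * (μ i - lam i)) = D at *
  generalize (∑ i, v i * μ i) = m at *
  rw [hsplit, hflam] at htan
  have hS : 0 < S := lt_of_lt_of_le hvj hvjS
  have hW : δ * S + c ≤ D + T * v j := by linarith
  have hTv : T * v j ≤ T * S := mul_le_mul_of_nonneg_left hvjS (by linarith)
  have hTv0 : 0 < T * v j := by positivity
  obtain ⟨hm1, hm2⟩ := abs_le.1 hmu
  have hδS : 0 < δ * S := by positivity
  have hPabs : |P| ≤ (D + T * v j) + (M + T) * S := by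
    rw [abs_le]; constructor <;> nlinarith [mul_nonneg hM0 hS.le]
  have hS' : S ≤ (D + T * v j) / δ := by
    rw [le_div_iff₀ hδ]; linarith
  have h1' : 1 ≤ (D + T * v j) / c := by
    rw [le_div_iff₀ hc0]; linarith
  have hQ : 1 + S + |P| ≤ C * (D + T * v j) := by
    have h6 : (M + T + 1) * S ≤ (M + T + 1) * ((D + T * v j) / δ) :=
      mul_le_mul_of_nonneg_left hS' (by linarith)
    have h7 : C * (D + T * v j) = (D + T * v j) + (M + T + 1) * ((D + T * v j) / δ)
        + (D + T * v j) / c := by rw [hC]; ring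
    rw [h7]; linarith
  have hQ0 : 0 < 1 + S + |P| := by positivity
  generalize 1 + S + |P| = Q at *
  push Not at hfail
  have hCT : 0 < 2 * C * T := by positivity
  rw [ge_iff_le, one_div, inv_mul_le_iff₀ hCT]
  rw [one_div, lt_inv_mul_iff₀ hCT] at hfail
  have hDC : 2 * C * D ≤ Q := by
    rcases le_or_gt D 0 with h | h
    · have := mul_nonpos_of_nonneg_of_nonpos (by linarith : (0 : ℝ) ≤ 2 * C) h
      linarith
    · have h8 : 2 * C * D * 1 ≤ 2 * C * D * T :=
        mul_le_mul_of_nonneg_left hT1 (by positivity)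
      have h9 : 2 * C * D * T = 2 * C * T * D := by ring
      linarith
  have h10 : 2 * C * T * v j = 2 * (C * (D + T * v j)) - 2 * C * D := by ring
  linarith
end

section
/- Assume f is concave on Γ and satisfies the unbounded condition: for every λ = (λ₁,…,λₙ) ∈ Γ, f(λ₁,…,λ_{n−1},λₙ + t) → +∞ as t → +∞. Then f satisfies the ellipticity condition: f_i(λ) > 0 for every λ ∈ Γ and every 1 ≤ i ≤ n. -/
open Filter Topology

/-- Lemma: concavity together with the unbounded condition
`f(λ₁,…,λ_{n-1},λ_n+t) → +∞ as t → +∞` implies the ellipticity condition `f_i > 0` on `Γ`. -/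
theorem stmt1 {n : ℕ} (Γ : Set (EuclideanSpace ℝ (Fin (n + 1))))
    (f : EuclideanSpace ℝ (Fin (n + 1)) → ℝ)
    (hΓopen : IsOpen Γ) (hΓconv : Convex ℝ Γ)
    (hΓcone : ∀ x ∈ Γ, ∀ t : ℝ, 0 < t → t • x ∈ Γ)
    (hΓsymm : ∀ e : Equiv.Perm (Fin (n + 1)), ∀ x ∈ Γ, WithLp.toLp 2 (fun i => x (e i)) ∈ Γ)
    (hΓbdry : (frontier Γ).Nonempty)
    (hΓpos : {x : EuclideanSpace ℝ (Fin (n + 1)) | ∀ i, 0 < x i} ⊆ Γ)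
    (hfsmooth : ContDiffOn ℝ (⊤ : ℕ∞) f Γ)
    (hfsymm : ∀ e : Equiv.Perm (Fin (n + 1)), ∀ x ∈ Γ, f (WithLp.toLp 2 (fun i => x (e i))) = f x)
    (hconc : ConcaveOn ℝ Γ f)
    (hunbounded : ∀ lam ∈ Γ,
      Tendsto (fun t : ℝ => f (lam + t • EuclideanSpace.single (Fin.last n) 1)) atTop atTop) :
    ∀ lam ∈ Γ, ∀ i, 0 < fpartial f i lam := by
  intro lam hlam i
  have hmem : ∀ t : ℝ, 0 < t → lam + t • EuclideanSpace.single i (1 : ℝ) ∈ Γ := by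
    intro t ht
    let one : EuclideanSpace ℝ (Fin (n + 1)) := WithLp.toLp 2 (fun _ => 1)
    have hc : ContinuousAt (fun s : ℝ => lam - s • one) 0 := by fun_prop
    have h1 : ∀ᶠ s in 𝓝 (0 : ℝ), lam - s • one ∈ Γ :=
      hc.eventually_mem (hΓopen.mem_nhds (by simpa using hlam))
    obtain ⟨ε, hε, hεpos⟩ :=
      ((h1.filter_mono nhdsWithin_le_nhds).and (self_mem_nhdsWithin (s := Set.Ioi (0 : ℝ)))).exists
    have hεpos' : 0 < ε := hεpos
    have h2 : ε • one + t • EuclideanSpace.single i (1 : ℝ) ∈ Γ := by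
      apply hΓpos
      intro j
      by_cases hj : j = i
      · subst hj
        simp [one]; positivity
      · simp [one, hj]; positivity
    have h3 := hΓcone _ (hΓconv hε h2 (a := 1 / 2) (b := 1 / 2)
      (by norm_num) (by norm_num) (by norm_num)) 2 (by norm_num)
    convert h3 using 1
    module
  let σ : Equiv.Perm (Fin (n + 1)) := Equiv.swap i (Fin.last n)
  have hub := hunbounded _ (hΓsymm σ lam hlam)
  obtain ⟨t, ht1, ht⟩ :=
    ((hub.eventually_gt_atTop (f lam)).and (eventually_gt_atTop (0 : ℝ))).exists
  have hlt : f lam < f (lam + t • EuclideanSpace.single i (1 : ℝ)) := by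
    rw [← hfsymm σ _ (hmem t ht)]
    refine lt_of_lt_of_eq ht1 (congrArg f ?_)
    ext j
    have hiff : σ j = i ↔ j = Fin.last n := by
      rw [← Equiv.eq_symm_apply]
      simp [σ]
    simp [Pi.single_apply, hiff]
  let v : EuclideanSpace ℝ (Fin (n + 1)) := EuclideanSpace.single i (1 : ℝ)
  have hd : HasFDerivAt f (fderiv ℝ f lam) lam :=
    ((hfsmooth.contDiffAt (hΓopen.mem_nhds hlam)).differentiableAt (by simp)).hasFDerivAt
  have hL : HasDerivAt (f ∘ (AffineMap.lineMap lam (lam + v) : ℝ →ᵃ[ℝ] _))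
      (fderiv ℝ f lam v) 0 := by
    have h := (AffineMap.hasDerivAt_lineMap (𝕜 := ℝ) (a := lam) (b := lam + v) (x := 0))
    have h' : HasFDerivAt f (fderiv ℝ f lam)
      ((AffineMap.lineMap lam (lam + v) : ℝ →ᵃ[ℝ] _) 0) := by simpa using hd
    simpa using h'.comp_hasDerivAt (0 : ℝ) h
  have hcv := hconc.comp_affineMap (AffineMap.lineMap lam (lam + v) : ℝ →ᵃ[ℝ] _)
  have hs := hcv.slope_le_of_hasDerivAt (x := 0) (y := t) (by simpa using hlam)
    (by simpa [AffineMap.lineMap_apply, add_comm] using hmem t ht) ht hL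
  refine lt_of_lt_of_le ?_ hs
  rw [slope_def_field]
  apply div_pos _ (by linarith)
  simpa [AffineMap.lineMap_apply, add_comm] using hlt
end

section
/- Assume f satisfies the ellipticity condition (f_i(λ) > 0 on Γ for all i) and the concavity condition. Then the set Γ_G^f = {λ ∈ Γ : f(tλ) stays bounded below as t → +∞} is a cone with vertex at the origin (closed under multiplication by positive scalars), is invariant under permutations of the coordinates, is convex, and satisfies Γₙ ⊆ Γ_G^f ⊆ Γ. Consequently, the interior of Γ_G^f is an open symmetric convex cone with vertex at the origin satisfying Γₙ ⊆ int(Γ_G^f) ⊆ Γ. -/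
open Filter Topology

/-- The cone `Γ_G^f = {λ ∈ Γ : f(tλ) stays bounded below as t → +∞}`. -/
def GammaG {n : ℕ} (Γ : Set (EuclideanSpace ℝ (Fin n)))
    (f : EuclideanSpace ℝ (Fin n) → ℝ) : Set (EuclideanSpace ℝ (Fin n)) :=
  {x ∈ Γ | ∃ C : ℝ, ∀ᶠ t : ℝ in atTop, C ≤ f (t • x)}

/-- Lemma: under ellipticity and concavity, `Γ_G^f` is a symmetric convex cone with vertex at
the origin and `Γₙ ⊆ Γ_G^f ⊆ Γ`; consequently its interior is an open symmetric convex cone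
with vertex at the origin and `Γₙ ⊆ int(Γ_G^f) ⊆ Γ`. -/
theorem stmt2 {n : ℕ} (Γ : Set (EuclideanSpace ℝ (Fin n)))
    (f : EuclideanSpace ℝ (Fin n) → ℝ)
    (hΓopen : IsOpen Γ) (hΓconv : Convex ℝ Γ)
    (hΓcone : ∀ x ∈ Γ, ∀ t : ℝ, 0 < t → t • x ∈ Γ)
    (hΓsymm : ∀ e : Equiv.Perm (Fin n), ∀ x ∈ Γ, WithLp.toLp 2 (fun i => x (e i)) ∈ Γ)
    (hΓbdry : (frontier Γ).Nonempty)
    (hΓpos : {x : EuclideanSpace ℝ (Fin n) | ∀ i, 0 < x i} ⊆ Γ)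
    (hfsmooth : ContDiffOn ℝ (⊤ : ℕ∞) f Γ)
    (hfsymm : ∀ e : Equiv.Perm (Fin n), ∀ x ∈ Γ, f (WithLp.toLp 2 (fun i => x (e i))) = f x)
    (hellip : ∀ x ∈ Γ, ∀ i, 0 < fpartial f i x)
    (hconc : ConcaveOn ℝ Γ f) :
    (∀ x ∈ GammaG Γ f, ∀ t : ℝ, 0 < t → t • x ∈ GammaG Γ f) ∧
    (∀ e : Equiv.Perm (Fin n), ∀ x ∈ GammaG Γ f, WithLp.toLp 2 (fun i => x (e i)) ∈ GammaG Γ f) ∧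
    Convex ℝ (GammaG Γ f) ∧
    {x : EuclideanSpace ℝ (Fin n) | ∀ i, 0 < x i} ⊆ GammaG Γ f ∧
    GammaG Γ f ⊆ Γ ∧
    IsOpen (interior (GammaG Γ f)) ∧
    (∀ x ∈ interior (GammaG Γ f), ∀ t : ℝ, 0 < t → t • x ∈ interior (GammaG Γ f)) ∧
    (∀ e : Equiv.Perm (Fin n), ∀ x ∈ interior (GammaG Γ f),
      WithLp.toLp 2 (fun i => x (e i)) ∈ interior (GammaG Γ f)) ∧
    Convex ℝ (interior (GammaG Γ f)) ∧
    {x : EuclideanSpace ℝ (Fin n) | ∀ i, 0 < x i} ⊆ interior (GammaG Γ f) ∧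
    interior (GammaG Γ f) ⊆ Γ := by
  have hcone : ∀ x ∈ GammaG Γ f, ∀ t : ℝ, 0 < t → t • x ∈ GammaG Γ f := by
    rintro x ⟨hx, C, hC⟩ t ht
    refine ⟨hΓcone x hx t ht, C, ?_⟩
    have h := (tendsto_id.atTop_mul_const ht : Tendsto (fun s : ℝ => s * t) atTop atTop)
    filter_upwards [h.eventually hC] with s hs
    rwa [smul_smul]
  have hsymm : ∀ e : Equiv.Perm (Fin n), ∀ x ∈ GammaG Γ f,
      WithLp.toLp 2 (fun i => x (e i)) ∈ GammaG Γ f := by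
    rintro e x ⟨hx, C, hC⟩
    refine ⟨hΓsymm e x hx, C, ?_⟩
    filter_upwards [hC, eventually_gt_atTop 0] with s hs hs0
    have := hfsymm e (s • x) (hΓcone x hx s hs0)
    have h2 : s • (WithLp.toLp 2 (fun i => x (e i)) : EuclideanSpace ℝ (Fin n))
        = WithLp.toLp 2 (fun i => (s • x) (e i)) := by
      ext i; simp
    rw [h2, this]
    exact hs
  have hconv : Convex ℝ (GammaG Γ f) := by
    rintro x ⟨hx, C, hC⟩ y ⟨hy, D, hD⟩ a b ha hb hab
    refine ⟨hΓconv hx hy ha hb hab, a * C + b * D, ?_⟩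
    filter_upwards [hC, hD, eventually_gt_atTop 0] with s hs hs' hs0
    have h := hconc.2 (hΓcone x hx s hs0) (hΓcone y hy s hs0) ha hb hab
    have h2 : s • (a • x + b • y) = a • s • x + b • s • y := by
      rw [smul_add, smul_comm s a, smul_comm s b]
    rw [h2]
    refine le_trans ?_ h
    simp only [smul_eq_mul]
    gcongr
  have hpos : {x : EuclideanSpace ℝ (Fin n) | ∀ i, 0 < x i} ⊆ GammaG Γ f := by
    intro x hx
    refine ⟨hΓpos hx, f x, ?_⟩
    have hd : ∀ t : ℝ, 0 < t → HasDerivAt (fun t : ℝ => f (t • x)) (fderiv ℝ f (t • x) x) t := by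
      intro t ht
      have hm := hΓcone x (hΓpos hx) t ht
      have h1 : DifferentiableAt ℝ f (t • x) :=
        (hfsmooth.contDiffAt (hΓopen.mem_nhds hm)).differentiableAt (by simp)
      have h2 : HasDerivAt (fun t : ℝ => t • x) x t := by
        simpa using (hasDerivAt_id t).smul_const x
      exact h1.hasFDerivAt.comp_hasDerivAt t h2
    have hmono : MonotoneOn (fun t : ℝ => f (t • x)) (Set.Ioi 0) := by
      apply monotoneOn_of_deriv_nonneg (convex_Ioi 0)
      · exact fun t ht => (hd t ht).continuousAt.continuousWithinAt
      · intro t ht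
        rw [interior_Ioi] at ht
        exact (hd t ht).differentiableAt.differentiableWithinAt
      · intro t ht
        rw [interior_Ioi] at ht
        rw [(hd t ht).deriv]
        have hm := hΓcone x (hΓpos hx) t ht
        have hsum : x = ∑ i, x i • EuclideanSpace.single i (1 : ℝ) := by
          ext j
          simp [Pi.single_apply]
        have : fderiv ℝ f (t • x) x = ∑ i, x i * fpartial f i (t • x) := by
          have h3 := congrArg (fderiv ℝ f (t • x)) hsum
          rw [map_sum] at h3
          rw [h3]
          simp only [map_smul, smul_eq_mul, fpartial]
        rw [this]
        exact Finset.sum_nonneg fun i _ => mul_nonneg (hx i).le (hellip _ hm i).le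
    filter_upwards [eventually_ge_atTop 1] with t ht
    have := hmono (Set.mem_Ioi.2 one_pos) (Set.mem_Ioi.2 (by linarith)) ht
    simpa using this
  have hsub : GammaG Γ f ⊆ Γ := fun x hx => hx.1
  have key : ∀ g : EuclideanSpace ℝ (Fin n) → EuclideanSpace ℝ (Fin n), IsOpenMap g →
      (∀ x ∈ GammaG Γ f, g x ∈ GammaG Γ f) →
      ∀ x ∈ interior (GammaG Γ f), g x ∈ interior (GammaG Γ f) := by
    intro g hg h x hx
    refine interior_maximal ?_ (hg _ isOpen_interior) (Set.mem_image_of_mem g hx)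
    rintro _ ⟨y, hy, rfl⟩
    exact h y (interior_subset hy)
  have hopen : IsOpen {x : EuclideanSpace ℝ (Fin n) | ∀ i, 0 < x i} := by
    simp only [Set.ofPred_forall]
    exact isOpen_iInter_of_finite fun i => isOpen_lt continuous_const (by fun_prop)
  refine ⟨hcone, hsymm, hconv, hpos, hsub, isOpen_interior, ?_, ?_, hconv.interior,
    interior_maximal hpos hopen, interior_subset.trans hsub⟩
  · intro x hx t ht
    exact key (fun x => t • x) (isOpenMap_smul₀ ht.ne') (fun x hx => hcone x hx t ht) x hx
  · intro e x hx
    refine key (fun x => WithLp.toLp 2 (fun i => x (e i))) ?_ (hsymm e) x hx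
    exact (LinearIsometryEquiv.piLpCongrLeft 2 ℝ ℝ e.symm).toHomeomorph.isOpenMap
end

section
/- Assume f is concave on Γ. Then for every λ ∈ Γ and every μ ∈ Γ_G^f, one has λ + μ ∈ Γ and f(λ + μ) ≥ f(λ). -/
open Filter Topology

/-- Lemma 3.5: if `f` is concave on `Γ`, then for every `λ ∈ Γ` and every `μ ∈ Γ_G^f`,
one has `λ + μ ∈ Γ` and `f(λ + μ) ≥ f(λ)`. -/
theorem stmt4 {n : ℕ} (Γ : Set (EuclideanSpace ℝ (Fin n)))
    (f : EuclideanSpace ℝ (Fin n) → ℝ)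
    (hΓopen : IsOpen Γ) (hΓconv : Convex ℝ Γ)
    (hΓcone : ∀ x ∈ Γ, ∀ t : ℝ, 0 < t → t • x ∈ Γ)
    (hΓsymm : ∀ e : Equiv.Perm (Fin n), ∀ x ∈ Γ, WithLp.toLp 2 (fun i => x (e i)) ∈ Γ)
    (hΓbdry : (frontier Γ).Nonempty)
    (hΓpos : {x : EuclideanSpace ℝ (Fin n) | ∀ i, 0 < x i} ⊆ Γ)
    (hfsmooth : ContDiffOn ℝ (⊤ : ℕ∞) f Γ)
    (hfsymm : ∀ e : Equiv.Perm (Fin n), ∀ x ∈ Γ, f (WithLp.toLp 2 (fun i => x (e i))) = f x)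
    (hconc : ConcaveOn ℝ Γ f) :
    ∀ lam ∈ Γ, ∀ μ ∈ GammaG Γ f, lam + μ ∈ Γ ∧ f lam ≤ f (lam + μ) := by
  intro lam hlam μ hμ
  obtain ⟨hμΓ, C, hC⟩ := hμ
  have hsum : lam + μ ∈ Γ := by
    have h1 := hΓconv hlam hμΓ (a := 1/2) (b := 1/2) (by norm_num) (by norm_num) (by norm_num)
    have h2 := hΓcone _ h1 2 (by norm_num)
    have h3 : (2:ℝ) • ((1/2 : ℝ) • lam + (1/2 : ℝ) • μ) = lam + μ := by
      rw [smul_add, smul_smul, smul_smul]; norm_num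
    rwa [h3] at h2
  refine ⟨hsum, ?_⟩
  have hcont : ContinuousAt f (lam + μ) :=
    hfsmooth.continuousOn.continuousAt (hΓopen.mem_nhds hsum)
  have hinv : Tendsto (fun t : ℝ => t⁻¹) atTop (𝓝 0) := tendsto_inv_atTop_zero
  have hp : Tendsto (fun t : ℝ => (1 - t⁻¹) • lam + μ) atTop (𝓝 (lam + μ)) := by
    have := ((hinv.const_sub 1).smul_const lam).add_const μ
    simpa using this
  have hL : Tendsto (fun t : ℝ => (1 - t⁻¹) * f lam + t⁻¹ * C) atTop (𝓝 (f lam)) := by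
    have := ((hinv.const_sub 1).mul_const (f lam)).add (hinv.mul_const C)
    simpa using this
  refine le_of_tendsto_of_tendsto hL (hcont.tendsto.comp hp) ?_
  filter_upwards [hC, eventually_ge_atTop (1 : ℝ)] with t ht ht1
  have ht0 : 0 < t := by linarith
  have hi0 : 0 ≤ t⁻¹ := by positivity
  have hi1 : t⁻¹ ≤ 1 := inv_le_one_of_one_le₀ ht1
  have h := hconc.2 hlam (hΓcone μ hμΓ t ht0)
    (show 0 ≤ 1 - t⁻¹ by linarith) hi0 (by ring)
  beta_reduce at h
  rw [smul_smul, inv_mul_cancel₀ ht0.ne', one_smul] at h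
  simp only [smul_eq_mul] at h
  have := mul_le_mul_of_nonneg_left ht hi0
  simp only [Function.comp]
  linarith
end

section
/- Assume f is concave on Γ and fix μ ∈ Γ. Then the following are mutually equivalent: (1) μ ∈ Γ_G^f, i.e. f(tμ) stays bounded below as t → +∞; (2) limsup_{t→+∞} f(tμ)/t ≥ 0; (3) Σ_{i=1}^n f_i(λ)μ_i ≥ 0 for every λ ∈ Γ; (4) f(λ + μ) ≥ f(λ) for every λ ∈ Γ. -/
open Filter Topology

theorem grad_ineq_aux {E : Type*} [NormedAddCommGroup E] [NormedSpace ℝ E] {S : Set E} {f : E → ℝ}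
    (hc : ConcaveOn ℝ S f) {x y : E} (hx : x ∈ S) (hy : y ∈ S) (hd : DifferentiableAt ℝ f x) :
    f y ≤ f x + fderiv ℝ f x (y - x) := by
  have h1 := hc.comp_affineMap (AffineMap.lineMap x y : ℝ →ᵃ[ℝ] E)
  have h2 : HasDerivAt (f ∘ (AffineMap.lineMap x y : ℝ →ᵃ[ℝ] E)) (fderiv ℝ f x (y - x)) 0 := by
    apply HasFDerivAt.comp_hasDerivAt (0 : ℝ) (l := f)
    · simpa using hd.hasFDerivAt
    · exact AffineMap.hasDerivAt_lineMap
  have h3 := h1.slope_le_of_hasDerivAt (x := 0) (y := 1) (by simpa using hx) (by simpa using hy)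
    one_pos h2
  simp [slope_def_field] at h3
  rw [map_sub]
  linarith

/-- Lemma 3.6 (criteria for the cone `Γ_G^f`): for `f` concave on `Γ` and `μ ∈ Γ` fixed, the
following are mutually equivalent:
(1) `f(tμ)` stays bounded below as `t → +∞` (i.e. `μ ∈ Γ_G^f`);
(2) `limsup_{t→+∞} f(tμ)/t ≥ 0`;
(3) `Σ_i f_i(λ) μ_i ≥ 0` for every `λ ∈ Γ`;
(4) `f(λ + μ) ≥ f(λ)` for every `λ ∈ Γ`. -/
theorem stmt5 {n : ℕ} (Γ : Set (EuclideanSpace ℝ (Fin n)))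
    (f : EuclideanSpace ℝ (Fin n) → ℝ)
    (hΓopen : IsOpen Γ) (hΓconv : Convex ℝ Γ)
    (hΓcone : ∀ x ∈ Γ, ∀ t : ℝ, 0 < t → t • x ∈ Γ)
    (hΓsymm : ∀ e : Equiv.Perm (Fin n), ∀ x ∈ Γ, (WithLp.toLp 2 (fun i => x (e i)) : EuclideanSpace ℝ (Fin n)) ∈ Γ)
    (hΓbdry : (frontier Γ).Nonempty)
    (hΓpos : {x : EuclideanSpace ℝ (Fin n) | ∀ i, 0 < x i} ⊆ Γ)
    (hfsmooth : ContDiffOn ℝ (⊤ : ℕ∞) f Γ)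
    (hfsymm : ∀ e : Equiv.Perm (Fin n), ∀ x ∈ Γ, f (WithLp.toLp 2 (fun i => x (e i))) = f x)
    (hconc : ConcaveOn ℝ Γ f)
    (μ : EuclideanSpace ℝ (Fin n)) (hμ : μ ∈ Γ) :
    [(∃ C : ℝ, ∀ᶠ t : ℝ in atTop, C ≤ f (t • μ)),
     ((0 : EReal) ≤ Filter.limsup (fun t : ℝ => ((f (t • μ) / t : ℝ) : EReal)) atTop),
     (∀ lam ∈ Γ, 0 ≤ ∑ i, fpartial f i lam * μ i),
     (∀ lam ∈ Γ, f lam ≤ f (lam + μ))].TFAE := by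
  have hdiff : ∀ x ∈ Γ, DifferentiableAt ℝ f x := fun x hx =>
    (hfsmooth.contDiffAt (hΓopen.mem_nhds hx)).differentiableAt (by simp)
  have hadd : ∀ x ∈ Γ, ∀ y ∈ Γ, x + y ∈ Γ := by
    intro x hx y hy
    have h := hΓconv (hΓcone x hx 2 two_pos) (hΓcone y hy 2 two_pos)
      (a := 1/2) (b := 1/2) (by norm_num) (by norm_num) (by norm_num)
    simpa [smul_smul] using h
  have hsum : ∀ x, ∑ i, fpartial f i x * μ i = fderiv ℝ f x μ := by
    intro x
    have hμs : μ = ∑ i, μ i • EuclideanSpace.single i (1 : ℝ) := by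
      ext j
      simp [Finset.sum_apply, Pi.single_apply]
    conv_rhs => rw [hμs]
    rw [map_sum]
    refine Finset.sum_congr rfl fun i _ => ?_
    rw [map_smul, smul_eq_mul, mul_comm]
    rfl
  simp only [hsum]
  tfae_have 1 → 2 := by
    rintro ⟨C, hC⟩
    have h0 : Tendsto (fun t : ℝ => ((C / t : ℝ) : EReal)) atTop (𝓝 ((0 : ℝ) : EReal)) :=
      (continuous_coe_real_ereal.tendsto 0).comp (tendsto_const_nhds.div_atTop tendsto_id)
    have h1 := h0.limsup_eq
    rw [EReal.coe_zero] at h1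
    rw [← h1]
    refine limsup_le_limsup ?_
    filter_upwards [hC, eventually_gt_atTop 0] with t ht ht0
    exact EReal.coe_le_coe_iff.2 (by gcongr)
  tfae_have 2 → 3 := by
    intro h lam hlam
    by_contra! hD
    set D := fderiv ℝ f lam μ
    have h0 : Tendsto (fun t : ℝ => (((f lam - fderiv ℝ f lam lam) / t + D : ℝ) : EReal)) atTop
        (𝓝 ((0 + D : ℝ) : EReal)) :=
      (continuous_coe_real_ereal.tendsto (0 + D)).comp
        ((tendsto_const_nhds.div_atTop tendsto_id).add tendsto_const_nhds)
    have h1 := h0.limsup_eq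
    have h2 : (0 : EReal) ≤ ((0 + D : ℝ) : EReal) := by
      rw [← h1]
      refine h.trans ?_
      refine limsup_le_limsup ?_
      filter_upwards [eventually_gt_atTop 0] with t ht0
      refine EReal.coe_le_coe_iff.2 ?_
      have := grad_ineq_aux hconc hlam (hΓcone μ hμ t ht0) (hdiff lam hlam)
      rw [map_sub, map_smul, smul_eq_mul] at this
      rw [div_add' _ _ _ ht0.ne']
      gcongr
      linarith
    rw [zero_add] at h2
    have := EReal.coe_nonneg.1 h2
    linarith
  tfae_have 3 → 4 := by
    intro h lam hlam
    have hm := hadd lam hlam μ hμ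
    have := grad_ineq_aux hconc hm hlam (hdiff _ hm)
    have h' := h _ hm
    rw [show lam - (lam + μ) = -μ by abel, map_neg] at this
    linarith
  tfae_have 4 → 1 := by
    intro h
    have hk : ∀ k : ℕ, f μ ≤ f (((k : ℝ) + 1) • μ) := by
      intro k
      induction k with
      | zero => simp
      | succ k ih =>
        refine ih.trans ?_
        have := h _ (hΓcone μ hμ ((k : ℝ) + 1) (by positivity))
        rw [show (((k + 1 : ℕ) : ℝ) + 1) • μ = ((k : ℝ) + 1) • μ + μ by
          push_cast; rw [add_smul ((k : ℝ) + 1), one_smul]]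
        exact this
    refine ⟨f μ, ?_⟩
    filter_upwards [eventually_ge_atTop 1] with t ht
    obtain ⟨k, hkt⟩ := exists_nat_ge t
    have hkpos : (0 : ℝ) < k := by linarith
    have hcc := hconc.2
    have h1 := @hcc μ hμ _ (hΓcone μ hμ ((k : ℝ) + 1) (by positivity))
      (1 - (t - 1) / k) ((t - 1) / k)
      (by rw [sub_nonneg, div_le_one hkpos]; linarith)
      (div_nonneg (by linarith) hkpos.le) (by ring)
    have h2 : (1 - (t - 1) / k) • μ + ((t - 1) / k) • (((k : ℝ) + 1) • μ) = t • μ := by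
      rw [smul_smul, ← add_smul]
      congr 1
      field_simp
      ring
    rw [h2, smul_eq_mul, smul_eq_mul] at h1
    have h3 := mul_le_mul_of_nonneg_left (hk k)
      (show 0 ≤ (t - 1) / k from div_nonneg (by linarith) hkpos.le)
    linarith
  tfae_finish
end

section
/- Assume f satisfies the ellipticity condition (f_i(λ) > 0 on Γ for all i) and the concavity condition. Then the following are mutually equivalent: (1) for all λ, μ ∈ Γ, liminf_{t→+∞} f(tλ) > f(μ); (2) Γ_G^f = Γ, i.e. for every λ ∈ Γ the function f(tλ) stays bounded below as t → +∞; (3) for every λ ∈ Γ, limsup_{t→+∞} f(tλ)/t ≥ 0; (4) f(λ + μ) > f(λ) for all λ, μ ∈ Γ; (5) Σ_{i=1}^n f_i(λ)μ_i > 0 for all λ, μ ∈ Γ. -/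
open Filter Topology

theorem supp_plane {n : ℕ} {Γ : Set (EuclideanSpace ℝ (Fin n))}
    {f : EuclideanSpace ℝ (Fin n) → ℝ} (hconc : ConcaveOn ℝ Γ f)
    {x y : EuclideanSpace ℝ (Fin n)} (hx : x ∈ Γ) (hy : y ∈ Γ) (hd : DifferentiableAt ℝ f x) :
    f y ≤ f x + fderiv ℝ f x (y - x) := by
  have hc := hconc.comp_affineMap (AffineMap.lineMap x y : ℝ →ᵃ[ℝ] EuclideanSpace ℝ (Fin n))
  have hder : HasDerivAt (f ∘ (AffineMap.lineMap x y : ℝ →ᵃ[ℝ] EuclideanSpace ℝ (Fin n)))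
      (fderiv ℝ f x (y - x)) 0 := by
    apply HasFDerivAt.comp_hasDerivAt
    · simpa using hd.hasFDerivAt
    · exact AffineMap.hasDerivAt_lineMap
  have := hc.slope_le_of_hasDerivAt (x := 0) (y := 1) (by simpa using hx) (by simpa using hy)
    one_pos hder
  simp [slope_def_field] at this
  rw [map_sub]
  linarith

theorem sum_fpartial {n : ℕ} (f : EuclideanSpace ℝ (Fin n) → ℝ)
    (x μ : EuclideanSpace ℝ (Fin n)) :
    ∑ i, fpartial f i x * μ i = fderiv ℝ f x μ := by
  have h : μ = ∑ i, μ i • EuclideanSpace.single i (1 : ℝ) := by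
    ext j
    simp [Finset.sum_apply, Pi.single_apply]
  conv_rhs => rw [h]
  simp [fpartial, mul_comm]

/-- Lemma 3.7: under ellipticity and concavity, the following are mutually equivalent:
(1) `liminf_{t→+∞} f(tλ) > f(μ)` for all `λ, μ ∈ Γ`;
(2) `Γ_G^f = Γ`, i.e. for every `λ ∈ Γ`, `f(tλ)` stays bounded below as `t → +∞`;
(3) `limsup_{t→+∞} f(tλ)/t ≥ 0` for every `λ ∈ Γ`;
(4) `f(λ + μ) > f(λ)` for all `λ, μ ∈ Γ`;
(5) `Σ_i f_i(λ) μ_i > 0` for all `λ, μ ∈ Γ`. -/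
theorem stmt6 {n : ℕ} (Γ : Set (EuclideanSpace ℝ (Fin n)))
    (f : EuclideanSpace ℝ (Fin n) → ℝ)
    (hΓopen : IsOpen Γ) (hΓconv : Convex ℝ Γ)
    (hΓcone : ∀ x ∈ Γ, ∀ t : ℝ, 0 < t → t • x ∈ Γ)
    (hΓsymm : ∀ e : Equiv.Perm (Fin n), ∀ x ∈ Γ, WithLp.toLp 2 (fun i => x (e i)) ∈ Γ)
    (hΓbdry : (frontier Γ).Nonempty)
    (hΓpos : {x : EuclideanSpace ℝ (Fin n) | ∀ i, 0 < x i} ⊆ Γ)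
    (hfsmooth : ContDiffOn ℝ (⊤ : ℕ∞) f Γ)
    (hfsymm : ∀ e : Equiv.Perm (Fin n), ∀ x ∈ Γ, f (WithLp.toLp 2 (fun i => x (e i))) = f x)
    (hellip : ∀ x ∈ Γ, ∀ i, 0 < fpartial f i x)
    (hconc : ConcaveOn ℝ Γ f) :
    [(∀ lam ∈ Γ, ∀ μ ∈ Γ, ((f μ : ℝ) : EReal) <
        Filter.liminf (fun t : ℝ => ((f (t • lam) : ℝ) : EReal)) atTop),
     (∀ lam ∈ Γ, ∃ C : ℝ, ∀ᶠ t : ℝ in atTop, C ≤ f (t • lam)),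
     (∀ lam ∈ Γ, (0 : EReal) ≤
        Filter.limsup (fun t : ℝ => ((f (t • lam) / t : ℝ) : EReal)) atTop),
     (∀ lam ∈ Γ, ∀ μ ∈ Γ, f lam < f (lam + μ)),
     (∀ lam ∈ Γ, ∀ μ ∈ Γ, 0 < ∑ i, fpartial f i lam * μ i)].TFAE := by
  have hdiff : ∀ x ∈ Γ, DifferentiableAt ℝ f x := fun x hx =>
    (hfsmooth.contDiffAt (hΓopen.mem_nhds hx)).differentiableAt (by simp)
  have hadd : ∀ x ∈ Γ, ∀ y ∈ Γ, x + y ∈ Γ := by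
    intro x hx y hy
    have h := hΓconv hx hy (a := 1 / 2) (b := 1 / 2) (by norm_num) (by norm_num) (by norm_num)
    have h2 := hΓcone _ h 2 (by norm_num)
    rw [smul_add, smul_smul, smul_smul] at h2
    norm_num at h2
    exact h2
  have hpert : ∀ x ∈ Γ, ∀ v, ∃ ε : ℝ, 0 < ε ∧ ∀ s, 0 < s → s < ε → x - s • v ∈ Γ := by
    intro x hx v
    have hcont : Tendsto (fun s : ℝ => x - s • v) (𝓝 0) (𝓝 x) := by
      have : Continuous (fun s : ℝ => x - s • v) := by fun_prop
      simpa using this.tendsto 0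
    have hev := hcont.eventually (hΓopen.mem_nhds hx)
    obtain ⟨ε, hε, h⟩ := Metric.eventually_nhds_iff.1 hev
    exact ⟨ε, hε, fun s h0 h1 => h (by simpa [abs_of_pos h0] using h1)⟩
  have hn : Nonempty (Fin n) := by
    by_contra hne
    rw [not_nonempty_iff] at hne
    have : Γ = Set.univ := by
      ext x
      simp only [Set.mem_univ, iff_true]
      exact hΓpos (fun i => (hne.false i).elim)
    rw [this] at hΓbdry
    simp at hΓbdry
  obtain ⟨i0⟩ := hn
  simp only [sum_fpartial]
  tfae_have 1 → 2 := by
    intro h lam hl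
    exact ⟨f lam, (eventually_lt_of_lt_liminf (h lam hl lam hl)).mono
      fun t ht => (EReal.coe_lt_coe_iff.1 ht).le⟩
  tfae_have 2 → 3 := by
    intro h lam hl
    obtain ⟨C, hC⟩ := h lam hl
    have ht : Tendsto (fun t : ℝ => ((C / t : ℝ) : EReal)) atTop (𝓝 ((0 : ℝ) : EReal)) :=
      (continuous_coe_real_ereal.tendsto 0).comp (tendsto_const_nhds.div_atTop tendsto_id)
    rw [← EReal.coe_zero, ← ht.limsup_eq]
    refine limsup_le_limsup ?_
    filter_upwards [hC, eventually_gt_atTop 0] with t h1 h2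
    exact EReal.coe_le_coe_iff.2 (by gcongr)
  tfae_have 3 → 5 := by
    intro h lam hl
    have key : ∀ μ ∈ Γ, 0 ≤ fderiv ℝ f lam μ := by
      intro μ hμ
      have ht : Tendsto (fun t : ℝ => (((fderiv ℝ f lam μ + (f lam - fderiv ℝ f lam lam) / t) : ℝ)
          : EReal)) atTop (𝓝 ((fderiv ℝ f lam μ : ℝ) : EReal)) := by
        refine (continuous_coe_real_ereal.tendsto _).comp ?_
        have := (tendsto_const_nhds (x := fderiv ℝ f lam μ)).add
          ((tendsto_const_nhds (x := f lam - fderiv ℝ f lam lam)).div_atTop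
            (tendsto_id (α := ℝ) (x := atTop)))
        simpa using this
      have h0 := h μ hμ
      rw [← EReal.coe_le_coe_iff, ← ht.limsup_eq, EReal.coe_zero]
      refine h0.trans (limsup_le_limsup ?_)
      filter_upwards [eventually_gt_atTop 0] with t h2
      refine EReal.coe_le_coe_iff.2 ?_
      have := supp_plane hconc hl (hΓcone μ hμ t h2) (hdiff lam hl)
      rw [map_sub, map_smul, smul_eq_mul] at this
      rw [div_le_iff₀ h2, add_mul, div_mul_cancel₀ _ h2.ne']
      linarith
    intro μ hμ
    obtain ⟨ε, hε, h1⟩ := hpert μ hμ (EuclideanSpace.single i0 1)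
    have h2 := key _ (h1 (ε / 2) (by linarith) (by linarith))
    rw [map_sub, map_smul, smul_eq_mul] at h2
    have h3 : 0 < fderiv ℝ f lam (EuclideanSpace.single i0 1) := hellip lam hl i0
    have := mul_pos (half_pos hε) h3
    linarith
  tfae_have 5 → 4 := by
    intro h lam hl μ hμ
    have hs := hadd _ hl _ hμ
    have h1 := supp_plane hconc hs hl (hdiff _ hs)
    have h2 := h _ hs μ hμ
    rw [show lam - (lam + μ) = -μ by abel, map_neg] at h1
    linarith
  tfae_have 4 → 1 := by
    intro h lam hl μ hμ
    have h1 : ((f μ : ℝ) : EReal) < ((f (μ + μ) : ℝ) : EReal) :=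
      EReal.coe_lt_coe_iff.2 (h μ hμ μ hμ)
    refine h1.trans_le (le_liminf_of_le (by isBoundedDefault) ?_)
    obtain ⟨ε, hε, h2⟩ := hpert lam hl (μ + μ)
    filter_upwards [eventually_gt_atTop 0, eventually_gt_atTop ε⁻¹] with t h3 h4
    refine EReal.coe_le_coe_iff.2 ?_
    have h5 := hΓcone _ (h2 t⁻¹ (inv_pos.2 h3) (inv_lt_of_inv_lt₀ hε h4)) t h3
    rw [smul_sub, smul_smul, mul_inv_cancel₀ h3.ne', one_smul] at h5
    have h6 := h _ (hadd _ hμ _ hμ) _ h5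
    rw [add_sub_cancel] at h6
    exact h6.le
  tfae_finish
end

section
/- Let ε > 0 be fixed. Suppose the parameter 𝐚 of the arrow matrix A satisfies the quadratic growth condition 𝐚 ≥ ((2n−3)/ε)·Σ_{α=1}^{n−1}|a_α|² + (n−1)·Σ_{α=1}^{n−1}|d_α| + (n−2)ε/(2n−3). Then the n eigenvalues of A (counted with multiplicity) can be enumerated as λ₁, …, λₙ in such a way that d_α − ε < λ_α < d_α + ε for every 1 ≤ α ≤ n−1, and 𝐚 ≤ λₙ < 𝐚 + (n−1)ε. -/
open Filter

/-- The `(n+1) × (n+1)` Hermitian "arrow" matrix with diagonal `d₁, …, dₙ, 𝐚`, last column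
`a₁, …, aₙ` and last row `conj a₁, …, conj aₙ`. -/
noncomputable def arrowMatrix {n : ℕ} (d : Fin n → ℝ) (a : Fin n → ℂ) (aa : ℝ) :
    Matrix (Fin (n + 1)) (Fin (n + 1)) ℂ :=
  Matrix.of fun i j =>
    Fin.lastCases
      (Fin.lastCases ((aa : ℂ)) (fun β => (starRingEnd ℂ) (a β)) j)
      (fun α => Fin.lastCases (a α) (fun β => if α = β then (d α : ℂ) else 0) j)
      i


lemma quad_eig {N : ℕ} {A : Matrix (Fin N) (Fin N) ℂ} (hA : A.IsHermitian) (x : Fin N → ℂ) :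
    (star x ⬝ᵥ A.mulVec x).re = ∑ j, hA.eigenvalues j * ‖inner ℂ (hA.eigenvectorBasis j) (WithLp.toLp 2 x)‖^2 := by
  set v := hA.eigenvectorBasis
  have h1 : star x ⬝ᵥ A.mulVec x = inner ℂ (WithLp.toLp 2 x) (WithLp.toLp 2 (A.mulVec x)) := by
    rw [EuclideanSpace.inner_eq_star_dotProduct, dotProduct_comm]
  have h2 : ∀ j, inner ℂ (v j) (WithLp.toLp 2 (A.mulVec x)) = hA.eigenvalues j * inner ℂ (v j) (WithLp.toLp 2 x) := by
    intro j
    rw [EuclideanSpace.inner_eq_star_dotProduct, EuclideanSpace.inner_eq_star_dotProduct, dotProduct_comm]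
    have := hA.mulVec_eigenvectorBasis j
    change star (v j).ofLp ⬝ᵥ A.mulVec x = _ * (x ⬝ᵥ star (v j).ofLp)
    have h3 : Matrix.vecMul (star (v j).ofLp) A = (hA.eigenvalues j : ℂ) • star (v j).ofLp := by
      have h4 := congrArg star this
      rw [Matrix.star_mulVec, hA.eq] at h4
      rw [h4]
      ext i
      simp [v]
    rw [Matrix.dotProduct_mulVec, h3, smul_dotProduct, dotProduct_comm, smul_eq_mul]
  rw [h1, ← v.sum_inner_mul_inner, Complex.re_sum]
  refine Finset.sum_congr rfl fun j _ => ?_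
  rw [h2, ← inner_conj_symm]
  rw [mul_left_comm, Complex.conj_mul', ← Complex.ofReal_pow, ← Complex.ofReal_mul, Complex.ofReal_re]

lemma quad_arrow {n : ℕ} (d : Fin n → ℝ) (a : Fin n → ℂ) (aa : ℝ) (x : Fin (n+1) → ℂ) :
    (star x ⬝ᵥ (arrowMatrix d a aa).mulVec x).re =
      ∑ α : Fin n, (d α * ‖x α.castSucc‖^2 + 2 * (starRingEnd ℂ (x α.castSucc) * a α * x (Fin.last n)).re)
        + aa * ‖x (Fin.last n)‖^2 := by
  simp only [dotProduct, Matrix.mulVec, Fin.sum_univ_castSucc, arrowMatrix, Matrix.of_apply,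
    Fin.lastCases_last, Fin.lastCases_castSucc, ite_mul, zero_mul, Finset.sum_ite_eq, Finset.mem_univ, if_true]
  simp only [Pi.star_apply, mul_add, Finset.mul_sum, Complex.add_re, Complex.re_sum]
  rw [← add_assoc, ← Finset.sum_add_distrib]
  congr 1
  · refine Finset.sum_congr rfl fun α _ => ?_
    rw [← Complex.normSq_eq_norm_sq]
    simp [Complex.normSq_apply]
    ring
  · rw [← Complex.normSq_eq_norm_sq]
    simp [Complex.normSq_apply]
    ring

lemma exists_vec {N : ℕ} (v : OrthonormalBasis (Fin N) ℂ (EuclideanSpace ℂ (Fin N))) (S T : Finset (Fin N))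
    (h : S.card + T.card < N) : ∃ x : Fin N → ℂ, x ≠ 0 ∧ (∀ i ∈ S, x i = 0) ∧
      (∀ j ∈ T, inner ℂ (v j) (WithLp.toLp 2 x) = 0) := by
  let f : (Fin N → ℂ) →ₗ[ℂ] ((S → ℂ) × (T → ℂ)) :=
    { toFun := fun x => (fun i => x i, fun j => inner ℂ (v j) (WithLp.toLp 2 x))
      map_add' := by intro x y; ext <;> simp [inner_add_right]
      map_smul' := by intro c x; ext <;> simp [inner_smul_right] }
  have hk : LinearMap.ker f ≠ ⊥ := by
    apply LinearMap.ker_ne_bot_of_finrank_lt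
    simpa using h
  obtain ⟨x, hx, hx0⟩ := Submodule.exists_mem_ne_zero_of_ne_bot hk
  have hx' : f x = 0 := hx
  refine ⟨x, hx0, fun i hi => ?_, fun j hj => ?_⟩
  · exact congrFun (congrArg Prod.fst hx') ⟨i, hi⟩
  · exact congrFun (congrArg Prod.snd hx') ⟨j, hj⟩

lemma norm_eig {N : ℕ} (v : OrthonormalBasis (Fin N) ℂ (EuclideanSpace ℂ (Fin N))) (x : Fin N → ℂ) :
    ∑ j, ‖inner ℂ (v j) (WithLp.toLp 2 x)‖^2 = ∑ i, ‖x i‖^2 := by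
  rw [v.sum_sq_norm_inner_right, EuclideanSpace.norm_sq_eq]

lemma arrow_trace {n : ℕ} (d : Fin n → ℝ) (a : Fin n → ℂ) (aa : ℝ)
    (hA : (arrowMatrix d a aa).IsHermitian) : ∑ j, hA.eigenvalues j = ∑ α, d α + aa := by
  have h := hA.trace_eq_sum_eigenvalues
  have : (arrowMatrix d a aa).trace = ((∑ α, d α + aa : ℝ) : ℂ) := by
    simp [Matrix.trace, Fin.sum_univ_castSucc, arrowMatrix]
  rw [this] at h
  have h' := congrArg Complex.re h
  simpa using h'.symm


lemma arrow_upper {n : ℕ} (d : Fin n → ℝ) (a : Fin n → ℂ) (aa : ℝ)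
    (hA : (arrowMatrix d a aa).IsHermitian) (s : Equiv.Perm (Fin n)) (hs : Monotone (d ∘ s))
    (t : Equiv.Perm (Fin (n+1))) (ht : Monotone (hA.eigenvalues ∘ t)) (k : Fin n) :
    hA.eigenvalues (t k.castSucc) ≤ d (s k) := by
  obtain ⟨x, hx0, hS, hT⟩ := exists_vec hA.eigenvectorBasis
    (insert (Fin.last n) ((Finset.Ioi k).image (fun i => (s i).castSucc)))
    ((Finset.Iio k.castSucc).image t) (by
      have h1 := Finset.card_insert_le (Fin.last n) ((Finset.Ioi k).image (fun i => (s i).castSucc))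
      have h2 : ((Finset.Ioi k).image (fun i => (s i).castSucc)).card ≤ _ := Finset.card_image_le
      have h3 : ((Finset.Iio k.castSucc).image t).card ≤ _ := Finset.card_image_le
      have := k.2
      simp only [Fin.card_Ioi, Fin.card_Iio, Fin.val_castSucc] at h2 h3
      omega)
  have hl : x (Fin.last n) = 0 := hS _ (Finset.mem_insert_self _ _)
  have hx : ∀ i, k < i → x (s i).castSucc = 0 := fun i hi => hS _ (by simp [hi])
  have hpos : 0 < ∑ i, ‖x i‖^2 := by
    obtain ⟨i, hi⟩ := Function.ne_iff.mp hx0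
    exact Finset.sum_pos' (fun _ _ => by positivity) ⟨i, Finset.mem_univ _, by
      have : 0 < ‖x i‖ := norm_pos_iff.mpr hi
      positivity⟩
  have q1 := quad_eig hA x
  rw [quad_arrow] at q1
  have low : hA.eigenvalues (t k.castSucc) * ∑ i, ‖x i‖^2 ≤
      ∑ j, hA.eigenvalues j * ‖inner ℂ (hA.eigenvectorBasis j) (WithLp.toLp 2 x)‖^2 := by
    rw [← norm_eig hA.eigenvectorBasis, Finset.mul_sum]
    refine Finset.sum_le_sum fun j _ => ?_
    obtain ⟨j, rfl⟩ := t.surjective j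
    rcases lt_or_ge j k.castSucc with h | h
    · rw [hT (t j) (Finset.mem_image_of_mem _ (by simpa using h))]; simp
    · exact mul_le_mul_of_nonneg_right (ht h) (by positivity)
  have up : ∑ α : Fin n, (d α * ‖x α.castSucc‖^2 + 2 * (starRingEnd ℂ (x α.castSucc) * a α * x (Fin.last n)).re)
        + aa * ‖x (Fin.last n)‖^2 ≤ d (s k) * ∑ i, ‖x i‖^2 := by
    rw [Fin.sum_univ_castSucc, hl]
    simp only [mul_zero, Complex.zero_re, add_zero, norm_zero, ne_eq, OfNat.ofNat_ne_zero,
      not_false_eq_true, zero_pow]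
    rw [Finset.mul_sum]
    refine Finset.sum_le_sum fun j _ => ?_
    obtain ⟨j, rfl⟩ := s.surjective j
    rcases lt_or_ge k j with h | h
    · rw [hx j h]; simp
    · exact mul_le_mul_of_nonneg_right (hs h) (by positivity)
  rw [← q1] at low
  exact le_of_mul_le_mul_right (low.trans up) hpos

lemma cross_bound (y a z : ℂ) (ε : ℝ) (hε : 0 < ε) :
    0 ≤ ε * ‖y‖^2 + 2 * (starRingEnd ℂ y * a * z).re + ‖a‖^2 / ε * ‖z‖^2 := by
  have h1 : -(‖y‖ * ‖a‖ * ‖z‖) ≤ (starRingEnd ℂ y * a * z).re := by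
    have := (abs_le.mp (Complex.abs_re_le_norm (starRingEnd ℂ y * a * z))).1
    simpa using this
  have h2 : 0 ≤ (ε * ‖y‖ - ‖a‖ * ‖z‖)^2 / ε := by positivity
  have h3 : (ε * ‖y‖ - ‖a‖ * ‖z‖)^2 / ε = ε * ‖y‖^2 - 2 * (‖y‖ * ‖a‖ * ‖z‖) + ‖a‖^2 / ε * ‖z‖^2 := by
    field_simp
    ring
  linarith

lemma arrow_lower {n : ℕ} (d : Fin n → ℝ) (a : Fin n → ℂ) (aa : ℝ)
    (hA : (arrowMatrix d a aa).IsHermitian) (s : Equiv.Perm (Fin n)) (hs : Monotone (d ∘ s))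
    (t : Equiv.Perm (Fin (n+1))) (ht : Monotone (hA.eigenvalues ∘ t)) (k : Fin n)
    (ε : ℝ) (hε : 0 < ε) (hg : (∑ α, ‖a α‖^2 / ε) + d (s k) ≤ aa) :
    d (s k) - ε < hA.eigenvalues (t k.castSucc) := by
  obtain ⟨x, hx0, hS, hT⟩ := exists_vec hA.eigenvectorBasis
    ((Finset.Iio k).image (fun i => (s i).castSucc))
    ((Finset.Ioi k.castSucc).image t) (by
      have h2 : ((Finset.Iio k).image (fun i => (s i).castSucc)).card ≤ _ := Finset.card_image_le
      have h3 : ((Finset.Ioi k.castSucc).image t).card ≤ _ := Finset.card_image_le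
      have := k.2
      simp only [Fin.card_Ioi, Fin.card_Iio, Fin.val_castSucc] at h2 h3
      omega)
  have hx : ∀ i, i < k → x (s i).castSucc = 0 := fun i hi => hS _ (by simp [hi])
  have q1 := quad_eig hA x
  rw [quad_arrow] at q1
  by_contra! hcon
  have up : ∑ j, hA.eigenvalues j * ‖inner ℂ (hA.eigenvectorBasis j) (WithLp.toLp 2 x)‖^2
      ≤ (d (s k) - ε) * ∑ i, ‖x i‖^2 := by
    rw [← norm_eig hA.eigenvectorBasis, Finset.mul_sum]
    refine Finset.sum_le_sum fun j _ => ?_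
    obtain ⟨j, rfl⟩ := t.surjective j
    rcases lt_or_ge k.castSucc j with h | h
    · rw [hT (t j) (Finset.mem_image_of_mem _ (by simpa using h))]; simp
    · exact mul_le_mul_of_nonneg_right ((ht h).trans hcon) (by positivity)
  rw [← q1, Fin.sum_univ_castSucc, mul_add, Finset.mul_sum] at up
  have hd : ∀ α, d (s k) * ‖x α.castSucc‖^2 ≤ d α * ‖x α.castSucc‖^2 := by
    intro j
    obtain ⟨j, rfl⟩ := s.surjective j
    rcases lt_or_ge j k with h | h
    · rw [hx j h]; simp
    · exact mul_le_mul_of_nonneg_right (hs h) (by positivity)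
  have key : ∑ α : Fin n, ((d (s k) - ε) * ‖x α.castSucc‖^2 - ‖a α‖^2 / ε * ‖x (Fin.last n)‖^2) ≤
      ∑ α : Fin n, (d α * ‖x α.castSucc‖^2 + 2 * (starRingEnd ℂ (x α.castSucc) * a α * x (Fin.last n)).re) := by
    refine Finset.sum_le_sum fun α _ => ?_
    have := cross_bound (x α.castSucc) (a α) (x (Fin.last n)) ε hε
    linarith [hd α]
  rw [Finset.sum_sub_distrib, ← Finset.sum_mul] at key
  have hz : ‖x (Fin.last n)‖^2 = 0 := by
    have h0 : 0 ≤ ‖x (Fin.last n)‖^2 := by positivity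
    have := mul_le_mul_of_nonneg_right hg h0
    nlinarith
  have hl : x (Fin.last n) = 0 := by simpa using hz
  rw [hl] at up
  simp only [mul_zero, Complex.zero_re, add_zero, norm_zero, ne_eq, OfNat.ofNat_ne_zero,
      not_false_eq_true, zero_pow] at up
  apply hx0
  ext i
  refine Fin.lastCases hl (fun j => ?_) i
  have h1 : ∑ α : Fin n, ε * ‖x α.castSucc‖^2 ≤ 0 := by
    have h2 : ∑ α : Fin n, d (s k) * ‖x α.castSucc‖^2 ≤ ∑ α : Fin n, d α * ‖x α.castSucc‖^2 :=
      Finset.sum_le_sum fun α _ => hd α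
    simp only [sub_mul, Finset.sum_sub_distrib] at up
    linarith
  have h2 := Finset.single_le_sum (f := fun α : Fin n => ε * ‖x α.castSucc‖^2)
    (fun i _ => by positivity) (Finset.mem_univ j)
  have h3 : ε * ‖x j.castSucc‖^2 = 0 := le_antisymm (h2.trans h1) (by positivity)
  simpa [hε.ne'] using h3

/-- Lemma 3.8 (quantitative lemma): if the corner entry `𝐚` satisfies the quadratic growth
condition, then the eigenvalues of the arrow matrix can be enumerated so that the first `n-1`
lie within `ε` of the corresponding diagonal entries and the last lies in `[𝐚, 𝐚 + (n-1)ε)`.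
(Here the matrix has total size `n+1`, so `n-1` of the statement corresponds to `n`.) -/
theorem stmt8 {n : ℕ} (hn : 1 ≤ n) (d : Fin n → ℝ) (a : Fin n → ℂ) (aa : ℝ)
    (hA : (arrowMatrix d a aa).IsHermitian)
    (ε : ℝ) (hε : 0 < ε)
    (hgrow : aa ≥ ((2 * ((n : ℝ) + 1) - 3) / ε) * ∑ α, ‖a α‖ ^ 2
        + (((n : ℝ) + 1) - 1) * ∑ α, |d α|
        + ((((n : ℝ) + 1) - 2) * ε) / (2 * ((n : ℝ) + 1) - 3)) :
    ∃ σ : Equiv.Perm (Fin (n + 1)),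
      (∀ α : Fin n, d α - ε < hA.eigenvalues (σ α.castSucc) ∧
        hA.eigenvalues (σ α.castSucc) < d α + ε) ∧
      aa ≤ hA.eigenvalues (σ (Fin.last n)) ∧
      hA.eigenvalues (σ (Fin.last n)) < aa + (((n : ℝ) + 1) - 1) * ε := by
  have hn' : (1 : ℝ) ≤ n := by exact_mod_cast hn
  have hg : ∀ k, (∑ α, ‖a α‖^2 / ε) + d k ≤ aa := by
    intro k
    rw [← Finset.sum_div]
    have h1 : d k ≤ ∑ α, |d α| := (le_abs_self _).trans
      (Finset.single_le_sum (f := fun α => |d α|) (fun i _ => abs_nonneg _) (Finset.mem_univ k))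
    have h2 : 0 ≤ ∑ α, |d α| := Finset.sum_nonneg fun i _ => abs_nonneg _
    have h3 : 0 ≤ (∑ α, ‖a α‖^2) / ε :=
      div_nonneg (Finset.sum_nonneg fun i _ => by positivity) hε.le
    have h4 : 0 ≤ ((((n : ℝ) + 1) - 2) * ε) / (2 * ((n : ℝ) + 1) - 3) :=
      div_nonneg (mul_nonneg (by linarith) hε.le) (by linarith)
    have h5 : ((2 * ((n : ℝ) + 1) - 3) / ε) * ∑ α, ‖a α‖ ^ 2 =
      (2 * ((n : ℝ) + 1) - 3) * ((∑ α, ‖a α‖^2) / ε) := by ring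
    rw [h5] at hgrow
    nlinarith [mul_nonneg (sub_nonneg.2 hn') h2, mul_nonneg (sub_nonneg.2 hn') h3]
  let s := Tuple.sort d
  have hs : Monotone (d ∘ s) := Tuple.monotone_sort d
  let t := Tuple.sort hA.eigenvalues
  have ht : Monotone (hA.eigenvalues ∘ t) := Tuple.monotone_sort _
  let σ : Equiv.Perm (Fin (n+1)) :=
    ((finSuccEquivLast.trans (Equiv.optionCongr s.symm)).trans finSuccEquivLast.symm).trans t
  have hσ : ∀ α : Fin n, σ α.castSucc = t (s.symm α).castSucc := by
    intro α
    change t (finSuccEquivLast.symm (Equiv.optionCongr s.symm (finSuccEquivLast α.castSucc))) = _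
    rw [finSuccEquivLast_castSucc, Equiv.optionCongr_apply, Option.map_some, finSuccEquivLast_symm_some]
  have hup : ∀ α, hA.eigenvalues (σ α.castSucc) ≤ d α := by
    intro α
    simpa [hσ] using arrow_upper d a aa hA s hs t ht (s.symm α)
  have hlo : ∀ α, d α - ε < hA.eigenvalues (σ α.castSucc) := by
    intro α
    simpa [hσ] using arrow_lower d a aa hA s hs t ht (s.symm α) ε hε (hg _)
  have htr := arrow_trace d a aa hA
  rw [← Equiv.sum_comp σ, Fin.sum_univ_castSucc] at htr
  have e1 : ∑ α : Fin n, hA.eigenvalues (σ α.castSucc) ≤ ∑ α, d α :=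
    Finset.sum_le_sum fun α _ => hup α
  have e2 : ∑ α, (d α - ε) < ∑ α : Fin n, hA.eigenvalues (σ α.castSucc) :=
    Finset.sum_lt_sum_of_nonempty ⟨⟨0, hn⟩, Finset.mem_univ _⟩ fun α _ => hlo α
  rw [Finset.sum_sub_distrib] at e2
  simp only [Finset.sum_const, Finset.card_univ, Fintype.card_fin, nsmul_eq_mul] at e2
  refine ⟨σ, fun α => ⟨hlo α, (hup α).trans_lt (by linarith)⟩, by linarith, by linarith⟩
end

section
/- Let ε > 0 be fixed and let λ₁ ≤ λ₂ ≤ … ≤ λₙ denote the eigenvalues of the arrow matrix A listed in nondecreasing order. Suppose 𝐚 ≥ (1/ε)·Σ_{i=1}^{n−1}|a_i|² + Σ_{i=1}^{n−1}(d_i + (n−2)|d_i|) + (n−2)ε. Then there is a map α ↦ i_α from {1,…,n−1} to {1,…,n−1} such that |λ_α − d_{i_α}| < ε for every 1 ≤ α ≤ n−1, and moreover 0 ≤ λₙ − 𝐚 < (n−1)ε + |Σ_{α=1}^{n−1}(d_α − d_{i_α})|. -/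
open Filter

theorem arrow_eig {n : ℕ} (d : Fin n → ℝ) (a : Fin n → ℂ) (aa : ℝ)
    (hA : (arrowMatrix d a aa).IsHermitian) (k : Fin (n + 1)) :
    (∀ i : Fin n, ((hA.eigenvalues k : ℂ) - d i) * hA.eigenvectorBasis k i.castSucc
      = a i * hA.eigenvectorBasis k (Fin.last n)) ∧
    ((hA.eigenvalues k : ℂ) - aa) * hA.eigenvectorBasis k (Fin.last n)
      = ∑ i, (starRingEnd ℂ) (a i) * hA.eigenvectorBasis k i.castSucc := by
  have h := hA.mulVec_eigenvectorBasis k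
  generalize hA.eigenvectorBasis k = u at h ⊢
  generalize hA.eigenvalues k = x at h ⊢
  constructor
  · intro i
    have hi := congrFun h i.castSucc
    simp [Matrix.mulVec, dotProduct, Fin.sum_univ_castSucc, arrowMatrix] at hi
    linear_combination -hi
  · have hi := congrFun h (Fin.last n)
    simp [Matrix.mulVec, dotProduct, Fin.sum_univ_castSucc, arrowMatrix] at hi
    linear_combination -hi

theorem arrow_last_ne {n : ℕ} (d : Fin n → ℝ) (a : Fin n → ℂ) (aa : ℝ)
    (hA : (arrowMatrix d a aa).IsHermitian) (k : Fin (n + 1))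
    (hk : ∀ i, hA.eigenvalues k ≠ d i) : hA.eigenvectorBasis k (Fin.last n) ≠ 0 := by
  intro h0
  have h := (arrow_eig d a aa hA k).1
  have hz : hA.eigenvectorBasis k = 0 := by
    ext j
    refine Fin.lastCases ?_ (fun i => ?_) j
    · simpa using h0
    · have := h i
      rw [h0, mul_zero, mul_eq_zero] at this
      rcases this with h1 | h1
      · exact absurd (by exact_mod_cast sub_eq_zero.mp h1) (hk i)
      · simpa using h1
  have := hA.eigenvectorBasis.orthonormal.1 k
  rw [hz] at this
  simp at this

theorem arrow_two {n : ℕ} (d : Fin n → ℝ) (a : Fin n → ℂ) (aa : ℝ)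
    (hA : (arrowMatrix d a aa).IsHermitian) (k l : Fin (n + 1)) (hkl : k ≠ l)
    (hk : ∀ i, d i < hA.eigenvalues k) (hl : ∀ i, d i < hA.eigenvalues l) : False := by
  have hk0 := arrow_last_ne d a aa hA k (fun i => (hk i).ne')
  have hl0 := arrow_last_ne d a aa hA l (fun i => (hl i).ne')
  have ek := (arrow_eig d a aa hA k).1
  have el := (arrow_eig d a aa hA l).1
  have ho := hA.eigenvectorBasis.orthonormal.2 hkl
  set u := hA.eigenvectorBasis k
  set v := hA.eigenvectorBasis l
  set x := hA.eigenvalues k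
  set y := hA.eigenvalues l
  have hu : ∀ i, u i.castSucc = a i * u (Fin.last n) / ((x - d i : ℝ) : ℂ) := by
    intro i
    have : ((x - d i : ℝ) : ℂ) ≠ 0 := by exact_mod_cast (sub_pos.2 (hk i)).ne'
    rw [eq_div_iff this, ← ek i]; push_cast; ring
  have hv : ∀ i, v i.castSucc = a i * v (Fin.last n) / ((y - d i : ℝ) : ℂ) := by
    intro i
    have : ((y - d i : ℝ) : ℂ) ≠ 0 := by exact_mod_cast (sub_pos.2 (hl i)).ne'
    rw [eq_div_iff this, ← el i]; push_cast; ring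
  have key : (starRingEnd ℂ) (u (Fin.last n)) * v (Fin.last n) *
      ((1 + ∑ i, ‖a i‖ ^ 2 / ((x - d i) * (y - d i)) : ℝ) : ℂ) = 0 := by
    rw [← ho]
    simp only [PiLp.inner_apply, Fin.sum_univ_castSucc, RCLike.inner_apply]
    push_cast
    rw [mul_add, mul_one, Finset.mul_sum, add_comm]
    congr 1
    · refine Finset.sum_congr rfl fun i _ => ?_
      rw [hu i, hv i, ← Complex.mul_conj', map_div₀, map_mul, Complex.conj_ofReal]
      push_cast
      rw [div_eq_mul_inv _ (((x : ℂ) - d i) * (y - d i)), mul_inv]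
      ring
    · ring
  have hpos : 0 < 1 + ∑ i, ‖a i‖ ^ 2 / ((x - d i) * (y - d i)) := by
    have : 0 ≤ ∑ i, ‖a i‖ ^ 2 / ((x - d i) * (y - d i)) :=
      Finset.sum_nonneg fun i _ => div_nonneg (by positivity)
        (mul_nonneg (sub_pos.2 (hk i)).le (sub_pos.2 (hl i)).le)
    linarith
  have h3 : ((1 + ∑ i, ‖a i‖ ^ 2 / ((x - d i) * (y - d i)) : ℝ) : ℂ) ≠ 0 := by
    exact_mod_cast hpos.ne'
  exact mul_ne_zero (mul_ne_zero (by simpa using hk0) hl0) h3 key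

theorem arrow_far {n : ℕ} (d : Fin n → ℝ) (a : Fin n → ℂ) (aa : ℝ)
    (hA : (arrowMatrix d a aa).IsHermitian) (k : Fin (n + 1)) (ε : ℝ) (hε : 0 < ε)
    (hk : ∀ i, ε ≤ |hA.eigenvalues k - d i|) :
    aa - hA.eigenvalues k ≤ (1 / ε) * ∑ i, ‖a i‖ ^ 2 := by
  have hne : ∀ i, hA.eigenvalues k - d i ≠ 0 := fun i h => by
    have := hk i
    rw [h, abs_zero] at this
    linarith
  have hk0 := arrow_last_ne d a aa hA k (fun i h => hne i (sub_eq_zero.2 h))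
  obtain ⟨ek, el⟩ := arrow_eig d a aa hA k
  set u := hA.eigenvectorBasis k
  set x := hA.eigenvalues k
  have hu : ∀ i, u i.castSucc = a i * u (Fin.last n) / ((x - d i : ℝ) : ℂ) := by
    intro i
    have : ((x - d i : ℝ) : ℂ) ≠ 0 := by exact_mod_cast hne i
    rw [eq_div_iff this, ← ek i]; push_cast; ring
  have h1 : x - aa = ∑ i, ‖a i‖ ^ 2 / (x - d i) := by
    have : ((x - aa : ℝ) : ℂ) = ((∑ i, ‖a i‖ ^ 2 / (x - d i) : ℝ) : ℂ) := by
      apply mul_right_cancel₀ hk0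
      push_cast
      rw [el, Finset.sum_mul]
      refine Finset.sum_congr rfl fun i _ => ?_
      rw [hu i, ← Complex.mul_conj']
      push_cast
      ring
    exact_mod_cast this
  have : aa - x = ∑ i, -(‖a i‖ ^ 2 / (x - d i)) := by
    rw [Finset.sum_neg_distrib, ← h1]; ring
  rw [this, Finset.mul_sum]
  refine Finset.sum_le_sum fun i _ => ?_
  calc -(‖a i‖ ^ 2 / (x - d i)) ≤ |‖a i‖ ^ 2 / (x - d i)| := neg_le_abs _
    _ = ‖a i‖ ^ 2 / |x - d i| := by rw [abs_div, abs_of_nonneg (by positivity)]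
    _ ≤ ‖a i‖ ^ 2 / ε := by gcongr; exact hk i
    _ = _ := by ring

theorem arrow_rayleigh {m : ℕ} (A : Matrix (Fin m) (Fin m) ℂ) (hA : A.IsHermitian) (j : Fin m)
    (M : ℝ) (hM : ∀ k, hA.eigenvalues k ≤ M) : (A j j).re ≤ M := by
  set U : Matrix (Fin m) (Fin m) ℂ := (hA.eigenvectorUnitary : Matrix (Fin m) (Fin m) ℂ) with hU
  have h1 : A j j = ((∑ k, hA.eigenvalues k * ‖U j k‖ ^ 2 : ℝ) : ℂ) := by
    have h := congrFun (congrFun hA.spectral_theorem j) j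
    rw [h]
    rw [Unitary.conjStarAlgAut_apply, Matrix.mul_apply]
    simp only [Matrix.mul_diagonal, Matrix.star_apply]
    push_cast
    refine Finset.sum_congr rfl fun k _ => ?_
    rw [← Complex.mul_conj']
    simp [hU]
    ring
  have h2 : ∑ k, ‖U j k‖ ^ 2 = 1 := by
    have h0 : U * star U = 1 := Unitary.mul_star_self_of_mem hA.eigenvectorUnitary.2
    have h := congrFun (congrFun h0 j) j
    simp only [Matrix.mul_apply, Matrix.star_apply, Matrix.one_apply_eq] at h
    have : ((∑ k, ‖U j k‖ ^ 2 : ℝ) : ℂ) = 1 := by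
      rw [← h]
      push_cast
      refine Finset.sum_congr rfl fun k _ => ?_
      rw [← Complex.mul_conj']
      rfl
    exact_mod_cast this
  rw [h1, Complex.ofReal_re]
  calc _ ≤ ∑ k, M * ‖U j k‖ ^ 2 := Finset.sum_le_sum fun k _ => by gcongr; exact hM k
    _ = M := by rw [← Finset.mul_sum, h2, mul_one]

theorem stmt9 {n : ℕ} (hn : 1 ≤ n) (d : Fin n → ℝ) (a : Fin n → ℂ) (aa : ℝ)
    (hA : (arrowMatrix d a aa).IsHermitian)
    (lam : Fin (n + 1) → ℝ) (hmono : Monotone lam)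
    (hperm : ∃ e : Equiv.Perm (Fin (n + 1)), ∀ k, lam k = hA.eigenvalues (e k))
    (ε : ℝ) (hε : 0 < ε)
    (hgrow : aa ≥ (1 / ε) * ∑ i, ‖a i‖ ^ 2
        + ∑ i, (d i + (((n : ℝ) + 1) - 2) * |d i|)
        + (((n : ℝ) + 1) - 2) * ε) :
    ∃ idx : Fin n → Fin n,
      (∀ α : Fin n, |lam α.castSucc - d (idx α)| < ε) ∧
      0 ≤ lam (Fin.last n) - aa ∧
      lam (Fin.last n) - aa < (((n : ℝ) + 1) - 1) * ε + |∑ α, (d α - d (idx α))| := by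
  obtain ⟨e, he⟩ := hperm
  have hn1 : (1 : ℝ) ≤ n := by exact_mod_cast hn
  have hne : Nonempty (Fin n) := ⟨⟨0, hn⟩⟩
  have hclose : ∀ α : Fin n, ∃ i, |lam α.castSucc - d i| < ε := by
    intro α
    by_contra! hfar
    have h1 := arrow_far d a aa hA (e α.castSucc) ε hε (by simpa [he] using hfar)
    rw [← he] at h1
    have h2 : ∃ i, lam α.castSucc ≤ d i := by
      by_contra! hlt
      refine arrow_two d a aa hA (e α.castSucc) (e (Fin.last n))
        (fun h => (Fin.castSucc_lt_last α).ne (e.injective h)) ?_ ?_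
      · intro i; rw [← he]; exact hlt i
      · intro i; rw [← he]; exact (hlt i).trans_le (hmono (Fin.le_last _))
    obtain ⟨i, hi⟩ := h2
    have h3 : lam α.castSucc ≤ d i - ε := by
      have := hfar i
      rw [abs_of_nonpos (by linarith)] at this
      linarith
    have h4 : d i ≤ ∑ i, (d i + (((n : ℝ) + 1) - 2) * |d i|) := by
      rw [← Finset.add_sum_erase _ _ (Finset.mem_univ i)]
      have h5 : 0 ≤ (((n : ℝ) + 1) - 2) * |d i| := mul_nonneg (by linarith) (abs_nonneg _)
      have h6 : 0 ≤ ∑ j ∈ Finset.univ.erase i, (d j + (((n : ℝ) + 1) - 2) * |d j|) := by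
        refine Finset.sum_nonneg fun j hj => ?_
        have hji := Finset.ne_of_mem_erase hj
        have hn2 : 2 ≤ n := by
          by_contra h
          apply hji
          ext
          omega
        have hn2' : (2 : ℝ) ≤ n := by exact_mod_cast hn2
        have := neg_abs_le (d j)
        nlinarith [abs_nonneg (d j)]
      linarith
    have h7 : 0 ≤ (((n : ℝ) + 1) - 2) * ε := mul_nonneg (by linarith) hε.le
    linarith
  choose idx hidx using hclose
  refine ⟨idx, hidx, ?_, ?_⟩
  · have := arrow_rayleigh _ hA (Fin.last n) (lam (Fin.last n)) (fun k => by
      have h := he (e.symm k)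
      rw [e.apply_symm_apply] at h
      rw [← h]
      exact hmono (Fin.le_last _))
    simp [arrowMatrix] at this
    linarith
  · have htr : ∑ i, d i + aa = ∑ k, lam k := by
      have h := hA.trace_eq_sum_eigenvalues
      have h' : ∑ k, lam k = ∑ k, hA.eigenvalues k := by
        rw [← Equiv.sum_comp e hA.eigenvalues]
        exact Finset.sum_congr rfl fun k _ => he k
      rw [h']
      simp [Matrix.trace, Fin.sum_univ_castSucc (n := n), arrowMatrix] at h
      rw [Fin.sum_univ_castSucc]
      exact_mod_cast h
    rw [Fin.sum_univ_castSucc] at htr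
    have h1 : ∑ α, (d (idx α) - lam α.castSucc) < ∑ _α : Fin n, ε :=
      Finset.sum_lt_sum_of_nonempty Finset.univ_nonempty fun α _ => by
        have := (abs_lt.1 (hidx α)).1
        linarith
    have h2 := le_abs_self (∑ α, (d α - d (idx α)))
    simp only [Finset.sum_sub_distrib, Finset.sum_const, Finset.card_univ, Fintype.card_fin,
      nsmul_eq_mul] at h1 h2 ⊢
    linarith
end

section
/- Assume the diagonal entries of the arrow matrix A are distinct and increasing: d₁ < d₂ < … < d_{n−1}. Let ε be a constant with 0 < ε ≤ (1/2)·min{|d_i − d_j| : i ≠ j}, and let λ₁ ≤ … ≤ λₙ denote the eigenvalues of A in nondecreasing order. If 𝐚 ≥ (1/ε)·Σ_{i=1}^{n−1}|a_i|² + (n−1)·Σ_{i=1}^{n−1}|d_i| + (n−2)ε, then |d_α − λ_α| < ε for every 1 ≤ α ≤ n−1, and 0 ≤ λₙ − 𝐚 < (n−1)ε. -/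
open Filter

open Matrix in
lemma arrow_diag {N : ℕ} (A : Matrix (Fin N) (Fin N) ℂ) (hA : A.IsHermitian)
    (lam : Fin N → ℝ) (e : Equiv.Perm (Fin N)) (he : ∀ k, lam k = hA.eigenvalues (e k)) :
    ∃ Y : (Fin N → ℂ) →ₗ[ℂ] (Fin N → ℂ), ∀ x,
      (∑ j, ‖Y x j‖ ^ 2 = ∑ j, ‖x j‖ ^ 2) ∧
      (star x ⬝ᵥ A *ᵥ x).re = ∑ j, lam j * ‖Y x j‖ ^ 2 := by
  set U : Matrix (Fin N) (Fin N) ℂ := (hA.eigenvectorUnitary).1 with hU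
  have hUU : U * star U = 1 := Unitary.coe_mul_star_self hA.eigenvectorUnitary
  have hs : A = U * diagonal (fun i => (hA.eigenvalues i : ℂ)) * star U := by
    have := hA.spectral_theorem
    rw [Unitary.conjStarAlgAut_apply] at this
    exact this
  have key : ∀ x : Fin N → ℂ, (star x ⬝ᵥ x).re = ∑ j, ‖x j‖ ^ 2 := by
    intro x
    simp only [dotProduct, Complex.re_sum, Pi.star_apply]
    refine Finset.sum_congr rfl fun j _ => ?_
    rw [RCLike.star_def, Complex.conj_mul']
    norm_cast
  have hst : ∀ x v : Fin N → ℂ, star x ⬝ᵥ U *ᵥ v = star (star U *ᵥ x) ⬝ᵥ v := by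
    intro x v
    rw [star_mulVec, dotProduct_mulVec, star_eq_conjTranspose, conjTranspose_conjTranspose]
  refine ⟨(LinearMap.funLeft ℂ ℂ e).comp (mulVecLin (star U)), fun x => ⟨?_, ?_⟩⟩
  · simp only [LinearMap.comp_apply, LinearMap.funLeft_apply, mulVecLin_apply]
    rw [Equiv.sum_comp e (fun j => ‖(star U *ᵥ x) j‖ ^ 2), ← key, ← key, ← hst, mulVec_mulVec, hUU,
      one_mulVec]
  · simp only [LinearMap.comp_apply, LinearMap.funLeft_apply, mulVecLin_apply, he]
    rw [Equiv.sum_comp e (fun j => hA.eigenvalues j * ‖(star U *ᵥ x) j‖ ^ 2)]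
    conv_lhs => rw [hs, ← mulVec_mulVec, ← mulVec_mulVec, hst]
    simp only [dotProduct, Complex.re_sum, Pi.star_apply]
    refine Finset.sum_congr rfl fun j _ => ?_
    rw [mulVec_diagonal, mul_left_comm, RCLike.star_def, Complex.conj_mul']
    norm_cast

open Matrix in
lemma arrow_form {n : ℕ} (d : Fin n → ℝ) (a : Fin n → ℂ) (aa : ℝ) (x : Fin (n + 1) → ℂ) :
    (star x ⬝ᵥ arrowMatrix d a aa *ᵥ x).re =
      ∑ b : Fin n, (d b * ‖x b.castSucc‖ ^ 2
        + 2 * (star (x b.castSucc) * a b * x (Fin.last n)).re) + aa * ‖x (Fin.last n)‖ ^ 2 := by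
  simp only [dotProduct, mulVec, Fin.sum_univ_castSucc, arrowMatrix, of_apply,
    Fin.lastCases_castSucc, Fin.lastCases_last, ite_mul, zero_mul, Finset.sum_ite_eq,
    Finset.mem_univ, if_true, Pi.star_apply]
  simp only [mul_add, Finset.mul_sum, Finset.sum_add_distrib, Complex.add_re, Complex.re_sum]
  have h1 : ∀ (c : ℝ) (z : ℂ), (star z * (c * z)).re = c * ‖z‖ ^ 2 := by
    intro c z
    rw [mul_left_comm, RCLike.star_def, Complex.conj_mul']
    norm_cast
  simp only [h1]
  have h2 : ∀ b, (star (x (Fin.last n)) * ((starRingEnd ℂ) (a b) * x b.castSucc)).re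
      = (star (x b.castSucc) * a b * x (Fin.last n)).re := by
    intro b
    simp
    ring
  have h3 : ∀ b, (star (x b.castSucc) * (a b * x (Fin.last n))).re
      = (star (x b.castSucc) * a b * x (Fin.last n)).re := by
    intro b
    rw [mul_assoc]
  simp only [h2, h3, ← Finset.mul_sum]
  linarith

lemma arrow_ker {n : ℕ} (L : (Fin (n + 1) → ℂ) →ₗ[ℂ] (Fin n → ℂ)) :
    ∃ x, L x = 0 ∧ 0 < ∑ j, ‖x j‖ ^ 2 := by
  have h : LinearMap.ker L ≠ ⊥ := L.ker_ne_bot_of_finrank_lt (by simp)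
  obtain ⟨x, hx, h0⟩ := Submodule.exists_mem_ne_zero_of_ne_bot h
  refine ⟨x, hx, ?_⟩
  obtain ⟨i, hi⟩ := Function.ne_iff.mp h0
  exact Finset.sum_pos' (fun _ _ => by positivity)
    ⟨i, Finset.mem_univ _, by have : 0 < ‖x i‖ := norm_pos_iff.mpr hi
                              positivity⟩

/-- Lemma 10.2: distinct increasing diagonal entries; for `0 < ε ≤ ½ min_{i≠j} |d_i − d_j|`
and `𝐚` satisfying the quadratic growth condition, the ordered eigenvalues satisfy
`|d_α − λ_α| < ε` for `α < n` and `0 ≤ λₙ − 𝐚 < (n−1)ε`.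
(Here the matrix has total size `n+1`, so `n-1` of the statement corresponds to `n`.) -/
theorem stmt10 {n : ℕ} (hn : 1 ≤ n) (d : Fin n → ℝ) (a : Fin n → ℂ) (aa : ℝ)
    (hd : StrictMono d)
    (hA : (arrowMatrix d a aa).IsHermitian)
    (lam : Fin (n + 1) → ℝ) (hmono : Monotone lam)
    (hperm : ∃ e : Equiv.Perm (Fin (n + 1)), ∀ k, lam k = hA.eigenvalues (e k))
    (ε : ℝ) (hε : 0 < ε)
    (hεmin : ∀ i j : Fin n, i ≠ j → ε ≤ |d i - d j| / 2)
    (hgrow : aa ≥ (1 / ε) * ∑ i, ‖a i‖ ^ 2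
        + (((n : ℝ) + 1) - 1) * ∑ i, |d i|
        + (((n : ℝ) + 1) - 2) * ε) :
    (∀ α : Fin n, |d α - lam α.castSucc| < ε) ∧
    0 ≤ lam (Fin.last n) - aa ∧
    lam (Fin.last n) - aa < (((n : ℝ) + 1) - 1) * ε := by
  obtain ⟨e, he⟩ := hperm
  obtain ⟨Y, hY⟩ := arrow_diag _ hA lam e he
  have hup : ∀ α : Fin n, lam α.castSucc ≤ d α := by
    intro α
    obtain ⟨x, hx, hpos⟩ := arrow_ker (LinearMap.pi fun b : Fin n =>
      if b < α then (LinearMap.proj b.castSucc).comp Y else LinearMap.proj b.succ)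
    have hx1 : ∀ b < α, Y x b.castSucc = 0 := by
      intro b hb
      have := congrFun hx b
      simpa [hb] using this
    have hx2 : ∀ b : Fin n, α ≤ b → x b.succ = 0 := by
      intro b hb
      have := congrFun hx b
      simpa [not_lt.mpr hb] using this
    obtain ⟨hY1, hY2⟩ := hY x
    rw [arrow_form] at hY2
    have hlast : x (Fin.last n) = 0 := by
      obtain ⟨m, rfl⟩ : ∃ m, n = m + 1 := ⟨n - 1, by omega⟩
      have := hx2 (Fin.last m) (Fin.le_last _)
      simpa using this
    have hx3 : ∀ b : Fin n, α < b → x b.castSucc = 0 := by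
      intro b hb
      have hb' : (α : ℕ) < b := hb
      have := hx2 ⟨b - 1, by omega⟩ (by rw [Fin.le_def]; simp; omega)
      convert this using 2
      ext
      simp
      omega
    have h1 : lam α.castSucc * ∑ j, ‖Y x j‖ ^ 2 ≤ ∑ j, lam j * ‖Y x j‖ ^ 2 := by
      rw [Finset.mul_sum]
      refine Finset.sum_le_sum fun j _ => ?_
      by_cases hj : α.castSucc ≤ j
      · exact mul_le_mul_of_nonneg_right (hmono hj) (by positivity)
      · have hj' : (j : ℕ) < α := by
          simpa [Fin.le_def] using hj
        have := hx1 ⟨j, by omega⟩ hj'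
        have h : Y x j = 0 := this
        simp [h]
    have h2 : ∑ j, lam j * ‖Y x j‖ ^ 2 ≤ d α * ∑ j, ‖x j‖ ^ 2 := by
      rw [← hY2, Fin.sum_univ_castSucc, hlast]
      simp only [mul_zero, Complex.zero_re, add_zero, norm_zero, ne_eq, OfNat.ofNat_ne_zero,
        not_false_eq_true, zero_pow, Finset.mul_sum]
      refine Finset.sum_le_sum fun b _ => ?_
      by_cases hb : b ≤ α
      · exact mul_le_mul_of_nonneg_right (hd.monotone hb) (by positivity)
      · simp [hx3 b (not_le.mp hb)]
    rw [hY1] at h1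
    exact le_of_mul_le_mul_right (h1.trans h2) hpos
  have hlow : ∀ α : Fin n, d α - ε < lam α.castSucc := by
    intro α
    by_contra! hcon
    obtain ⟨x, hx, hpos⟩ := arrow_ker (LinearMap.pi fun b : Fin n =>
      if b < α then LinearMap.proj b.castSucc else (LinearMap.proj b.succ).comp Y)
    have hx1 : ∀ b < α, x b.castSucc = 0 := by
      intro b hb
      have := congrFun hx b
      simpa [hb] using this
    have hx2 : ∀ b : Fin n, α ≤ b → Y x b.succ = 0 := by
      intro b hb
      have := congrFun hx b
      simpa [not_lt.mpr hb] using this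
    obtain ⟨hY1, hY2⟩ := hY x
    rw [arrow_form] at hY2
    have h1 : ∑ j, lam j * ‖Y x j‖ ^ 2 ≤ (d α - ε) * ∑ j, ‖x j‖ ^ 2 := by
      rw [← hY1, Finset.mul_sum]
      refine Finset.sum_le_sum fun j _ => ?_
      by_cases hj : j ≤ α.castSucc
      · exact mul_le_mul_of_nonneg_right ((hmono hj).trans hcon) (by positivity)
      · have hj' : (α : ℕ) < j := by
          simpa [Fin.le_def] using hj
        have := hx2 ⟨j - 1, by omega⟩ (by rw [Fin.le_def]; simp; omega)
        have h : Y x j = 0 := by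
          convert this using 2
          ext
          simp
          omega
        simp [h]
    rw [← hY2, Fin.sum_univ_castSucc] at h1
    rw [Fin.sum_univ_castSucc] at hpos
    set y := x (Fin.last n) with hy
    have hcross : ∀ b : Fin n, -(‖x b.castSucc‖ * ‖a b‖ * ‖y‖) ≤
        (star (x b.castSucc) * a b * y).re := by
      intro b
      have := Complex.abs_re_le_norm (star (x b.castSucc) * a b * y)
      rw [norm_mul, norm_mul, norm_star] at this
      exact neg_le_of_abs_le this
    have hdiag : ∀ b : Fin n, (d α - ε) * ‖x b.castSucc‖ ^ 2 + ε * ‖x b.castSucc‖ ^ 2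
        ≤ d b * ‖x b.castSucc‖ ^ 2 := by
      intro b
      by_cases hb : b < α
      · simp [hx1 b hb]
      · have := mul_le_mul_of_nonneg_right (hd.monotone (not_lt.mp hb))
          (sq_nonneg ‖x b.castSucc‖)
        linarith
    have hterm : ∀ b : Fin n, (d α - ε) * ‖x b.castSucc‖ ^ 2 - 1 / ε * ‖a b‖ ^ 2 * ‖y‖ ^ 2 ≤
        d b * ‖x b.castSucc‖ ^ 2 + 2 * (star (x b.castSucc) * a b * y).re := by
      intro b
      have h3 : 0 ≤ 1 / ε * (ε * ‖x b.castSucc‖ - ‖a b‖ * ‖y‖) ^ 2 := by positivity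
      have h4 : 1 / ε * (ε * ‖x b.castSucc‖ - ‖a b‖ * ‖y‖) ^ 2 = ε * ‖x b.castSucc‖ ^ 2
          - 2 * (‖x b.castSucc‖ * ‖a b‖ * ‖y‖) + 1 / ε * ‖a b‖ ^ 2 * ‖y‖ ^ 2 := by
        field_simp
        ring
      linarith [hcross b, hdiag b]
    have hsum := Finset.sum_le_sum (s := Finset.univ) fun b _ => hterm b
    rw [Finset.sum_sub_distrib, ← Finset.mul_sum, ← Finset.sum_mul, ← Finset.mul_sum] at hsum
    have hbig : 0 < aa - (d α - ε) - 1 / ε * ∑ i, ‖a i‖ ^ 2 := by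
      have h5 : |d α| ≤ ∑ i, |d i| :=
        Finset.single_le_sum (f := fun i => |d i|) (fun i _ => abs_nonneg _) (Finset.mem_univ α)
      have hn' : (1 : ℝ) ≤ n := by exact_mod_cast hn
      have h6 : 0 ≤ ((n : ℝ) - 1) * ∑ i, |d i| :=
        mul_nonneg (by linarith) (Finset.sum_nonneg fun i _ => abs_nonneg _)
      have h7 : 0 ≤ ((n : ℝ) - 1) * ε := mul_nonneg (by linarith) hε.le
      have h8 := le_abs_self (d α)
      linarith
    have hy0 : y = 0 := by
      by_contra hne
      have : 0 < ‖y‖ ^ 2 := by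
        have : 0 < ‖y‖ := norm_pos_iff.mpr hne
        positivity
      have := mul_pos hbig this
      linarith
    simp only [hy0, norm_zero, mul_zero, Complex.zero_re, add_zero, ne_eq, OfNat.ofNat_ne_zero,
        not_false_eq_true, zero_pow] at h1 hpos
    have hsum2 := Finset.sum_le_sum (s := Finset.univ) fun b _ => hdiag b
    rw [Finset.sum_add_distrib, ← Finset.mul_sum, ← Finset.mul_sum] at hsum2
    have := mul_pos hε hpos
    linarith
  have htr : ∑ α, d α + aa = ∑ α : Fin n, lam α.castSucc + lam (Fin.last n) := by
    have h := hA.trace_eq_sum_eigenvalues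
    rw [← Equiv.sum_comp e] at h
    simp only [← he] at h
    rw [Matrix.trace, Fin.sum_univ_castSucc, Fin.sum_univ_castSucc] at h
    simp only [Matrix.diag, arrowMatrix, Matrix.of_apply, Fin.lastCases_castSucc,
      Fin.lastCases_last, if_true] at h
    have h' := congrArg Complex.re h
    simpa using h'
  have hdiff : lam (Fin.last n) - aa = ∑ α : Fin n, (d α - lam α.castSucc) := by
    rw [Finset.sum_sub_distrib]
    linarith
  refine ⟨fun α => ?_, ?_, ?_⟩
  · rw [abs_lt]
    constructor <;> linarith [hup α, hlow α]
  · rw [hdiff]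
    exact Finset.sum_nonneg fun α _ => by linarith [hup α]
  · rw [hdiff]
    have : ∑ α : Fin n, (d α - lam α.castSucc) < ∑ α : Fin n, ε :=
      Finset.sum_lt_sum_of_nonempty ⟨⟨0, hn⟩, Finset.mem_univ _⟩ fun α _ => by linarith [hlow α]
    simpa using this
end

section
/- Let A = [[d₁, a₁], [conj(a₁), 𝐚]] be a 2×2 Hermitian matrix with d₁, 𝐚 real and a₁ a nonzero complex number, and let λ₁ ≤ λ₂ be its eigenvalues. For any ε > 0, if 𝐚 ≥ |a₁|²/ε + d₁, then 0 ≤ d₁ − λ₁ = λ₂ − 𝐚 < ε. -/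
open Filter

/-- The 2×2 case: for the Hermitian matrix `[[d₁, a₁], [conj a₁, 𝐚]]` with `a₁ ≠ 0` and
eigenvalues `λ₁ ≤ λ₂`, if `𝐚 ≥ |a₁|²/ε + d₁` then `0 ≤ d₁ − λ₁ = λ₂ − 𝐚 < ε`. -/
theorem stmt12 (d1 aa : ℝ) (a1 : ℂ) (ha1 : a1 ≠ 0)
    (A : Matrix (Fin 2) (Fin 2) ℂ)
    (hAdef : A = !![(d1 : ℂ), a1; (starRingEnd ℂ) a1, (aa : ℂ)])
    (hA : A.IsHermitian)
    (lam1 lam2 : ℝ) (hle : lam1 ≤ lam2)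
    (hperm : ∃ e : Equiv.Perm (Fin 2),
      lam1 = hA.eigenvalues (e 0) ∧ lam2 = hA.eigenvalues (e 1))
    (ε : ℝ) (hε : 0 < ε)
    (hgrow : aa ≥ ‖a1‖ ^ 2 / ε + d1) :
    0 ≤ d1 - lam1 ∧ d1 - lam1 = lam2 - aa ∧ d1 - lam1 < ε := by
  have hn : 0 < ‖a1‖ ^ 2 := by
    have := norm_pos_iff.mpr ha1
    positivity
  have htr : lam1 + lam2 = d1 + aa := by
    have h := hA.trace_eq_sum_eigenvalues
    obtain ⟨e, h1, h2⟩ := hperm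
    rw [← Equiv.sum_comp e, Fin.sum_univ_two, ← h1, ← h2, hAdef, Matrix.trace_fin_two_of] at h
    have h' : ((d1 + aa : ℝ) : ℂ) = ((lam1 + lam2 : ℝ) : ℂ) := by
      push_cast
      exact h
    exact (Complex.ofReal_injective h').symm
  have hdet : lam1 * lam2 = d1 * aa - ‖a1‖ ^ 2 := by
    have h := hA.det_eq_prod_eigenvalues
    obtain ⟨e, h1, h2⟩ := hperm
    rw [← Equiv.prod_comp e, Fin.prod_univ_two, ← h1, ← h2, hAdef, Matrix.det_fin_two_of,
      Complex.mul_conj'] at h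
    have h' : ((d1 * aa - ‖a1‖ ^ 2 : ℝ) : ℂ) = ((lam1 * lam2 : ℝ) : ℂ) := by
      push_cast
      exact h
    exact (Complex.ofReal_injective h').symm
  generalize ‖a1‖ ^ 2 = n at *
  have hg : n ≤ (aa - d1) * ε := by
    rw [← div_le_iff₀ hε]
    linarith
  have hg0 : 0 < aa - d1 := by
    have : 0 < n / ε := by positivity
    linarith
  obtain ⟨x, rfl⟩ : ∃ x, lam1 = d1 - x := ⟨d1 - lam1, by ring⟩
  obtain rfl : lam2 = aa + x := by linarith
  have hx : x * (x + (aa - d1)) = n := by linarith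
  refine ⟨?_, by ring, ?_⟩
  · by_contra hc
    have h1 : x < 0 := by linarith
    have h2 : 0 < x + (aa - d1) := by linarith
    have := mul_neg_of_neg_of_pos h1 h2
    linarith
  · by_contra hc
    have h1 : ε ≤ x := by linarith
    nlinarith [mul_le_mul_of_nonneg_right h1 hg0.le, mul_pos hε hε]
end

section
/- Let f₁, …, fₙ be nonnegative real numbers, λ₁, …, λₙ arbitrary real numbers, r ∈ {1, …, n} any fixed index, and ε > 0. Then Σ_{i=1}^n f_i|λ_i| ≤ ε·Σ_{i≠r} f_i λ_i² + ε^{−1}·Σ_{i=1}^n f_i + |Σ_{i=1}^n f_i λ_i|. -/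
/-- Inequality (7.14): for nonnegative `f₁,…,fₙ`, arbitrary reals `λ₁,…,λₙ`, any fixed index
`r` and any `ε > 0`,
`Σ f_i |λ_i| ≤ ε Σ_{i≠r} f_i λ_i² + ε⁻¹ Σ f_i + |Σ f_i λ_i|`. -/
theorem stmt13 {n : ℕ} (f lam : Fin n → ℝ) (hf : ∀ i, 0 ≤ f i) (r : Fin n)
    (ε : ℝ) (hε : 0 < ε) :
    ∑ i, f i * |lam i| ≤
      ε * ∑ i ∈ Finset.univ.erase r, f i * lam i ^ 2
        + ε⁻¹ * ∑ i, f i + |∑ i, f i * lam i| := by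
  have h1 := Finset.add_sum_erase Finset.univ (fun i => f i * |lam i|) (Finset.mem_univ r)
  have h2 := Finset.add_sum_erase Finset.univ (fun i => f i * lam i) (Finset.mem_univ r)
  have h3 := Finset.add_sum_erase Finset.univ f (Finset.mem_univ r)
  have h4 : |∑ i ∈ Finset.univ.erase r, f i * lam i| ≤
      ∑ i ∈ Finset.univ.erase r, f i * |lam i| := by
    refine (Finset.abs_sum_le_sum_abs _ _).trans (le_of_eq ?_)
    refine Finset.sum_congr rfl fun i _ => ?_
    rw [abs_mul, abs_of_nonneg (hf i)]
  have h5 : 2 * ∑ i ∈ Finset.univ.erase r, f i * |lam i| ≤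
      ε * ∑ i ∈ Finset.univ.erase r, f i * lam i ^ 2
        + ε⁻¹ * ∑ i ∈ Finset.univ.erase r, f i := by
    rw [Finset.mul_sum, Finset.mul_sum, Finset.mul_sum, ← Finset.sum_add_distrib]
    refine Finset.sum_le_sum fun i _ => ?_
    have h : 2 * |lam i| ≤ ε * lam i ^ 2 + ε⁻¹ := by
      have e : ε * lam i ^ 2 + ε⁻¹ - 2 * |lam i| = ε⁻¹ * (ε * |lam i| - 1) ^ 2 := by
        rw [← sq_abs (lam i)]
        field_simp
        ring
      have : 0 ≤ ε⁻¹ * (ε * |lam i| - 1) ^ 2 := by positivity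
      linarith
    have := mul_le_mul_of_nonneg_left h (hf i)
    linarith
  have h6 : f r * |lam r| ≤ |∑ i, f i * lam i| + |∑ i ∈ Finset.univ.erase r, f i * lam i| := by
    have e : f r * |lam r| = |f r * lam r| := by rw [abs_mul, abs_of_nonneg (hf r)]
    have e2 : f r * lam r = ∑ i, f i * lam i - ∑ i ∈ Finset.univ.erase r, f i * lam i := by
      rw [← h2]; ring
    rw [e, e2]
    exact abs_sub _ _
  have h7 : 0 ≤ ε⁻¹ * f r := mul_nonneg (inv_nonneg.2 hε.le) (hf r)
  rw [← h3, mul_add]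
  linarith
end

section
/- Let ε > 0. If λ is an eigenvalue of the arrow matrix A such that |λ − d_i| ≥ ε for every 1 ≤ i ≤ n−1, then |λ − 𝐚| ≤ (1/ε)·Σ_{i=1}^{n−1}|a_i|². -/
open Filter

/-- If `λ` is an eigenvalue of the arrow matrix with `|λ − d_i| ≥ ε` for every `i ≤ n−1`,
then `|λ − 𝐚| ≤ (1/ε)·Σ_i |a_i|²`. -/
theorem stmt15 {n : ℕ} (hn : 1 ≤ n) (d : Fin n → ℝ) (a : Fin n → ℂ) (aa : ℝ)
    (ε : ℝ) (hε : 0 < ε) (lam : ℝ)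
    (hlam : (lam : ℂ) ∈ spectrum ℂ (arrowMatrix d a aa))
    (hfar : ∀ i, ε ≤ |lam - d i|) :
    |lam - aa| ≤ (1 / ε) * ∑ i, ‖a i‖ ^ 2 := by
  rw [← Matrix.spectrum_toLin', ← Module.End.hasEigenvalue_iff_mem_spectrum] at hlam
  obtain ⟨v, hv⟩ := hlam.exists_hasEigenvector
  have hA := hv.apply_eq_smul
  have hne := hv.2
  rw [Matrix.toLin'_apply] at hA
  have h1 : ∀ i : Fin n, (d i : ℂ) * v i.castSucc + a i * v (Fin.last n)
      = lam * v i.castSucc := by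
    intro i
    have h := congrFun hA i.castSucc
    simpa [Matrix.mulVec, dotProduct, Fin.sum_univ_castSucc, arrowMatrix] using h
  have h2 : ∑ i : Fin n, (starRingEnd ℂ) (a i) * v i.castSucc + aa * v (Fin.last n)
      = lam * v (Fin.last n) := by
    have h := congrFun hA (Fin.last n)
    simpa [Matrix.mulVec, dotProduct, Fin.sum_univ_castSucc, arrowMatrix] using h
  have h3 : ∀ i : Fin n, ε * ‖v i.castSucc‖ ≤ ‖a i‖ * ‖v (Fin.last n)‖ := by
    intro i
    have h : ((lam - d i : ℝ) : ℂ) * v i.castSucc = a i * v (Fin.last n) := by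
      push_cast
      linear_combination - h1 i
    have h' := congrArg norm h
    rw [norm_mul, norm_mul, Complex.norm_real, Real.norm_eq_abs] at h'
    rw [← h']
    exact mul_le_mul_of_nonneg_right (hfar i) (norm_nonneg _)
  have hlast : 0 < ‖v (Fin.last n)‖ := by
    rw [norm_pos_iff]
    intro h0
    apply hne
    funext j
    refine Fin.lastCases h0 (fun i => ?_) j
    have h := h3 i
    rw [h0, norm_zero, mul_zero] at h
    have h5 : ‖v i.castSucc‖ ≤ 0 := by
      by_contra hc
      push Not at hc
      linarith [mul_pos hε hc]
    simpa using h5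
  have h4 : ((lam - aa : ℝ) : ℂ) * v (Fin.last n)
      = ∑ i : Fin n, (starRingEnd ℂ) (a i) * v i.castSucc := by
    push_cast
    linear_combination - h2
  have h5 : |lam - aa| * ‖v (Fin.last n)‖ ≤ ∑ i : Fin n, ‖a i‖ * ‖v i.castSucc‖ := by
    rw [← Real.norm_eq_abs, ← Complex.norm_real, ← norm_mul, h4]
    refine (norm_sum_le _ _).trans (le_of_eq ?_)
    simp
  have h6 : ε * ∑ i : Fin n, ‖a i‖ * ‖v i.castSucc‖
      ≤ (∑ i, ‖a i‖ ^ 2) * ‖v (Fin.last n)‖ := by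
    rw [Finset.mul_sum, Finset.sum_mul]
    refine Finset.sum_le_sum fun i _ => ?_
    have := mul_le_mul_of_nonneg_left (h3 i) (norm_nonneg (a i))
    linarith
  rw [one_div, inv_mul_eq_div, le_div_iff₀ hε]
  refine le_of_mul_le_mul_right ?_ hlast
  have := mul_le_mul_of_nonneg_left h5 hε.le
  linarith
end

section
/- Suppose i₀ ≠ j₀ are two indices in {1, …, n−1} with d_{i₀} = d_{j₀}. Then d_{i₀} is an eigenvalue of the arrow matrix A for every value of the parameter 𝐚, and the characteristic polynomial factors as det(λ·I − A) = (λ − d_{i₀})·det(λ·I − A′), where A′ is the (n−1)×(n−1) Hermitian arrow matrix obtained from A by deleting the i₀-th row and column and replacing the off-diagonal entry a_{j₀} by (|a_{j₀}|² + |a_{i₀}|²)^{1/2}. Consequently, the eigenvalues of A (with multiplicity) are d_{i₀} together with the eigenvalues of A′. -/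
open Filter

theorem arrow_det {n : ℕ} (d : Fin n → ℝ) (a : Fin n → ℂ) (aa : ℝ) (lam : ℂ)
    (h : ∀ i, lam ≠ (d i : ℂ)) :
    (lam • (1 : Matrix (Fin (n + 1)) (Fin (n + 1)) ℂ) - arrowMatrix d a aa).det
      = (∏ i, (lam - (d i : ℂ))) *
        (lam - aa - ∑ i, ((‖a i‖ ^ 2 : ℝ) : ℂ) / (lam - (d i : ℂ))) := by
  have hb : (lam • (1 : Matrix (Fin (n + 1)) (Fin (n + 1)) ℂ) - arrowMatrix d a aa).submatrix
      finSumFinEquiv finSumFinEquiv =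
      Matrix.fromBlocks (Matrix.diagonal fun i => lam - (d i : ℂ))
        (Matrix.of fun i (_ : Fin 1) => - a i)
        (Matrix.of fun (_ : Fin 1) i => - (starRingEnd ℂ) (a i))
        (Matrix.of fun (_ _ : Fin 1) => lam - aa) := by
    have hl : ∀ x : Fin 1, Fin.natAdd n x = Fin.last n := by
      intro x; ext; simp
    have hc : ∀ x : Fin n, Fin.castAdd 1 x = x.castSucc := fun x => rfl
    ext i j
    rcases i with i | i <;> rcases j with j | j
    · by_cases hij : i = j
      · subst hij; simp [arrowMatrix, hc]
      · simp [arrowMatrix, hc, hij, Matrix.one_apply]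
    · simp [arrowMatrix, hc, hl, Matrix.one_apply, (Fin.castSucc_lt_last i).ne]
    · simp [arrowMatrix, hc, hl, Matrix.one_apply, (Fin.castSucc_lt_last j).ne']
    · simp [arrowMatrix, hl, Matrix.one_apply]
  have hne : ∀ i, lam - (d i : ℂ) ≠ 0 := fun i => sub_ne_zero.2 (h i)
  rw [← Matrix.det_submatrix_equiv_self finSumFinEquiv, hb]
  have hmul : (Matrix.diagonal fun i => (lam - (d i : ℂ))⁻¹) *
      (Matrix.diagonal fun i => lam - (d i : ℂ)) = 1 := by
    rw [Matrix.diagonal_mul_diagonal, ← Matrix.diagonal_one]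
    congr 1; ext i; exact inv_mul_cancel₀ (hne i)
  letI : Invertible (Matrix.diagonal fun i => lam - (d i : ℂ)) :=
    ⟨_, hmul, mul_eq_one_comm.1 hmul⟩
  rw [Matrix.det_fromBlocks₁₁, Matrix.det_diagonal]
  congr 1
  rw [Matrix.det_fin_one]
  have : ⅟ (Matrix.diagonal fun i => lam - (d i : ℂ)) =
    (Matrix.diagonal fun i => (lam - (d i : ℂ))⁻¹) := rfl
  rw [this]
  rw [Matrix.sub_apply, Matrix.mul_apply]
  simp only [Matrix.mul_diagonal, Matrix.of_apply]
  congr 1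
  refine Finset.sum_congr rfl fun i _ => ?_
  have h2 : ((‖a i‖ ^ 2 : ℝ) : ℂ) = (starRingEnd ℂ) (a i) * a i := by
    rw [Complex.conj_mul']; push_cast; rfl
  rw [h2]; ring

/-- Reduction when two diagonal entries coincide (`d_{i₀} = d_{j₀}`, `i₀ ≠ j₀`): `d_{i₀}` is an
eigenvalue of the arrow matrix `A`, the characteristic polynomial factors as
`det(λI − A) = (λ − d_{i₀})·det(λI − A′)` where `A′` is the smaller arrow matrix obtained by
deleting the `i₀`-th row and column and replacing `a_{j₀}` by `(|a_{j₀}|² + |a_{i₀}|²)^{1/2}`,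
and the eigenvalues of `A` (with multiplicity) are `d_{i₀}` together with those of `A′`.
(Here the big matrix has total size `m+2 ≥ 3`.) -/
theorem stmt16 {m : ℕ} (hm : 1 ≤ m) (d : Fin (m + 1) → ℝ) (a : Fin (m + 1) → ℂ) (aa : ℝ)
    (i0 j0 : Fin (m + 1)) (hij : i0 ≠ j0) (hd : d i0 = d j0)
    (d' : Fin m → ℝ) (a' : Fin m → ℂ)
    (hd' : ∀ β : Fin m, d' β = d (i0.succAbove β))
    (ha' : ∀ β : Fin m, a' β = if i0.succAbove β = j0
        then ((Real.sqrt (‖a j0‖ ^ 2 + ‖a i0‖ ^ 2) : ℝ) : ℂ)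
        else a (i0.succAbove β))
    (hA : (arrowMatrix d a aa).IsHermitian)
    (hA' : (arrowMatrix d' a' aa).IsHermitian) :
    ((d i0 : ℂ) ∈ spectrum ℂ (arrowMatrix d a aa)) ∧
    (∀ lam : ℂ,
      (lam • (1 : Matrix (Fin (m + 2)) (Fin (m + 2)) ℂ) - arrowMatrix d a aa).det
        = (lam - (d i0 : ℂ)) *
            (lam • (1 : Matrix (Fin (m + 1)) (Fin (m + 1)) ℂ) - arrowMatrix d' a' aa).det) ∧
    (Finset.univ.val.map hA.eigenvalues = (d i0) ::ₘ Finset.univ.val.map hA'.eigenvalues) := by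
  have key : ∀ lam : ℂ, (∀ i, lam ≠ (d i : ℂ)) →
      (lam • (1 : Matrix (Fin (m + 2)) (Fin (m + 2)) ℂ) - arrowMatrix d a aa).det
        = (lam - (d i0 : ℂ)) *
            (lam • (1 : Matrix (Fin (m + 1)) (Fin (m + 1)) ℂ) - arrowMatrix d' a' aa).det := by
    intro lam h
    rw [arrow_det d a aa lam h, arrow_det d' a' aa lam (fun i => by rw [hd']; exact h _),
      Fin.prod_univ_succAbove _ i0, Fin.sum_univ_succAbove _ i0, mul_assoc]
    simp only [hd']
    congr 3
    obtain ⟨k, hk⟩ := Fin.exists_succAbove_eq hij.symm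
    have hterm : ∀ β : Fin m, ((‖a' β‖ ^ 2 : ℝ) : ℂ) / (lam - (d (i0.succAbove β) : ℂ)) =
        ((‖a (i0.succAbove β)‖ ^ 2 : ℝ) : ℂ) / (lam - (d (i0.succAbove β) : ℂ)) +
        if β = k then ((‖a i0‖ ^ 2 : ℝ) : ℂ) / (lam - (d i0 : ℂ)) else 0 := by
      intro β
      by_cases hβ : β = k
      · subst hβ
        have hn : ‖a' β‖ ^ 2 = ‖a j0‖ ^ 2 + ‖a i0‖ ^ 2 := by
          rw [ha', if_pos hk, Complex.norm_real, Real.norm_eq_abs, sq_abs,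
            Real.sq_sqrt (by positivity)]
        rw [hn, hk, hd, if_pos rfl, Complex.ofReal_add, add_div]
      · have : i0.succAbove β ≠ j0 := fun h' => hβ (Fin.succAbove_right_injective (h'.trans hk.symm))
        rw [ha', if_neg this, if_neg hβ, add_zero]
    rw [Finset.sum_congr rfl fun β _ => hterm β, Finset.sum_add_distrib]
    simp [add_comm]
  have hev : ∀ {k : ℕ} (M : Matrix (Fin k) (Fin k) ℂ) (lam : ℂ),
      M.charpoly.eval lam = (lam • (1 : Matrix (Fin k) (Fin k) ℂ) - M).det := by
    intro k M lam
    rw [Matrix.eval_charpoly, Matrix.smul_one_eq_diagonal]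
    rfl
  have hpoly : (arrowMatrix d a aa).charpoly =
      (Polynomial.X - Polynomial.C (d i0 : ℂ)) * (arrowMatrix d' a' aa).charpoly := by
    apply Polynomial.eq_of_infinite_eval_eq
    refine Set.Infinite.mono ?_ (Set.finite_range fun i => (d i : ℂ)).infinite_compl
    intro lam hl
    have := key lam (fun i hi => hl ⟨i, hi.symm⟩)
    simp only [Set.mem_ofPred_eq, Polynomial.eval_mul, hev, this, Polynomial.eval_sub,
      Polynomial.eval_X, Polynomial.eval_C]
  refine ⟨?_, ?_, ?_⟩
  · rw [Matrix.mem_spectrum_iff_isRoot_charpoly, hpoly]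
    simp
  · intro lam
    rw [← hev, ← hev, hpoly]
    simp
  · have h1 := hA.roots_charpoly_eq_eigenvalues
    have h2 := hA'.roots_charpoly_eq_eigenvalues
    rw [hpoly, Polynomial.roots_mul
      (mul_ne_zero (Polynomial.X_sub_C_ne_zero _) (Matrix.charpoly_monic _).ne_zero),
      Polynomial.roots_X_sub_C, h2] at h1
    apply Multiset.map_injective (f := fun x : ℝ => (x : ℂ)) Complex.ofReal_injective
    simp only [Multiset.map_cons, Multiset.map_map]
    rw [← Multiset.singleton_add]
    exact h1.symm
end
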